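/- arXiv:2006.14213 — 3 statements merged into one kernel-verified Lean document; each statement's English description precedes it below -/
import Mathlib

section
/- For every dimension d ≥ 1 and every constant c > 0 there exists a constant C(d,c) > 0 such that for every ε ∈ (0,1), every compact set E ⊂ ℝ^d that is weakly mean porous with parameters α(t) = ε·t and λ(k) = c·ε^{−1} (constant in k) satisfies dim_H(E) ≤ d − C(d,c)·ε^{d−1}. -/
open Metric Set MeasureTheory

noncomputable section

abbrev Plane := EuclideanSpace ℝ (Fin 2)

/-- An open axis-parallel cube in `ℝ^d` with side length `s`. -/
def IsCube {d : ℕ} (Q : Set (EuclideanSpace ℝ (Fin d))) (s : ℝ) : Prop :=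
  0 < s ∧ ∃ c : Fin d → ℝ, Q = {x | ∀ i, x i ∈ Set.Ioo (c i) (c i + s)}

/-- The curve condition with exponent `p` and constant `C`: any two points of the
complement of `Ω` can be joined by a unit-speed (1-Lipschitz) curve in the complement
along which the arclength integral of `dist(·, ∂Ω)^(1-p)` is at most `C‖z₁-z₂‖^(2-p)`. -/
def CurveCondition (Ω : Set Plane) (p C : ℝ) : Prop :=
  ∀ z₁ ∈ Ωᶜ, ∀ z₂ ∈ Ωᶜ, ∃ (L : ℝ) (γ : ℝ → Plane), 0 ≤ L ∧
    LipschitzOnWith 1 γ (Set.Icc 0 L) ∧ γ 0 = z₁ ∧ γ L = z₂ ∧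
    (∀ t ∈ Set.Icc (0:ℝ) L, γ t ∈ Ωᶜ) ∧
    (∫ t in (0:ℝ)..L, Metric.infDist (γ t) (frontier Ω) ^ (1 - p)) ≤ C * ‖z₁ - z₂‖ ^ (2 - p)

/-- `Ω` is a `J`-John domain: there is a center `x₀` such that every point can be joined
to `x₀` by a unit-speed (1-Lipschitz) curve `γ` in `Ω` with `dist(γ t, ∂Ω) ≥ J·t`. -/
def IsJohnDomain (Ω : Set Plane) (J : ℝ) : Prop :=
  ∃ x₀ ∈ Ω, ∀ x ∈ Ω, ∃ (ℓ : ℝ) (γ : ℝ → Plane), 0 ≤ ℓ ∧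
    LipschitzOnWith 1 γ (Set.Icc 0 ℓ) ∧ γ 0 = x ∧ γ ℓ = x₀ ∧
    (∀ t ∈ Set.Icc (0:ℝ) ℓ, γ t ∈ Ω ∧ J * t ≤ Metric.infDist (γ t) (frontier Ω))

/-- `Ω` is a Jordan domain: a bounded domain whose boundary is a homeomorphic
image of the circle. -/
def IsJordanDomain (Ω : Set Plane) : Prop :=
  IsOpen Ω ∧ IsConnected Ω ∧ Bornology.IsBounded Ω ∧
  ∃ f : (Metric.sphere (0 : Plane) 1) → Plane,
    Continuous f ∧ Function.Injective f ∧ Set.range f = frontier Ω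

/-- `E` is weakly mean porous with parameters `(α, lam)`: there is a pairwise disjoint
collection `D` of open cubes in the complement of `E` and a `j₀` such that for every
`x ∈ E` and `j ≥ j₀`, more than half of the scales `k ∈ {1,…,j}` admit at least `lam k`
cubes of `D` of side length at least `α(2^(-k))` inside the annulus
`B(x,2^(-k)) ∖ B(x,2^(-k-1))`. -/
def WeaklyMeanPorous {d : ℕ} (E : Set (EuclideanSpace ℝ (Fin d)))
    (α : ℝ → ℝ) (lam : ℕ → ℝ) : Prop :=
  ∃ (D : Set (Set (EuclideanSpace ℝ (Fin d)))) (j₀ : ℕ), 0 < j₀ ∧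
    (∀ Q ∈ D, (∃ s, IsCube Q s) ∧ Q ⊆ Eᶜ) ∧ D.Pairwise Disjoint ∧
    ∀ x ∈ E, ∀ j : ℕ, j₀ ≤ j →
      (j : ℝ) / 2 < ({k : ℕ | k ∈ Finset.Icc 1 j ∧
        ∃ S : Finset (Set (EuclideanSpace ℝ (Fin d))), lam k ≤ S.card ∧
          ∀ Q ∈ S, Q ∈ D ∧
            Q ⊆ Metric.ball x ((2:ℝ) ^ (-(k:ℝ))) \ Metric.ball x ((2:ℝ) ^ (-(k:ℝ) - 1)) ∧
            ∃ s, α ((2:ℝ) ^ (-(k:ℝ))) ≤ s ∧ IsCube Q s}).ncard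

/-- Children of a dyadic index. -/
def dyCh {d : ℕ} (m : Fin d → ℤ) (e : Fin d → Fin 2) : Fin d → ℤ :=
  fun i => 2 * m i + ((e i : ℕ) : ℤ)

/-- Average over the tree of depth `n` below `(k, m)` of the path sums of `b`. -/
def treeAv {d : ℕ} (b : ℕ → (Fin d → ℤ) → ℝ) : ℕ → ℕ → (Fin d → ℤ) → ℝ
  | 0, k, m => b k m
  | n + 1, k, m => b k m + ((2:ℝ) ^ d)⁻¹ * ∑ e : Fin d → Fin 2, treeAv b n (k + 1) (dyCh m e)

/-- Average over the tree of depth `n` below `(k, m)` of the path products of `w`. -/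
def treeProd {d : ℕ} (w : ℕ → (Fin d → ℤ) → ℝ) : ℕ → ℕ → (Fin d → ℤ) → ℝ
  | 0, k, m => w k m
  | n + 1, k, m => w k m * (((2:ℝ) ^ d)⁻¹ * ∑ e : Fin d → Fin 2, treeProd w n (k + 1) (dyCh m e))

open Classical in
/-- Real indicator of a predicate on nodes. -/
def ind {d : ℕ} (g : ℕ → (Fin d → ℤ) → Prop) (k : ℕ) (m : Fin d → ℤ) : ℝ :=
  if g k m then 1 else 0

open Classical in
/-- Weight `θ` on good nodes and `1` on the others. -/
def wt {d : ℕ} (θ : ℝ) (g : ℕ → (Fin d → ℤ) → Prop) (k : ℕ) (m : Fin d → ℤ) : ℝ :=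
  if g k m then θ else 1

lemma card_ch (d : ℕ) : (Fintype.card (Fin d → Fin 2) : ℝ) = 2 ^ d := by
  simp

lemma treeProd_le {d : ℕ} (g : ℕ → (Fin d → ℤ) → Prop) (K : ℝ) (hK : 1 ≤ K)
    (hA : ∀ n k m, treeAv (ind g) n k m ≤ K) :
    ∀ n k m, treeProd (wt (2 * K / (2 * K - 1)) g) n k m ≤ 1 + treeAv (ind g) n k m / K := by
  have hK0 : 0 < K := by linarith
  have hK1 : 0 < 2 * K - 1 := by linarith
  have key : ∀ A, A ≤ K → 2 * K / (2 * K - 1) * (1 + (A - 1) / K) ≤ 1 + A / K := by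
    intro A hA
    have h1 : 1 + A / K = (K + A) / K := by field_simp
    have h2 : 2 * K / (2 * K - 1) * (1 + (A - 1) / K) = 2 * (K + A - 1) / (2 * K - 1) := by
      field_simp
      ring
    rw [h1, h2, div_le_div_iff₀ hK1 hK0]
    nlinarith
  intro n
  induction n with
  | zero =>
    intro k m
    have := hA 0 k m
    simp only [treeProd, treeAv, wt, ind] at *
    split_ifs at * with h
    · have := key 1 hK
      simpa using this
    · simp
  | succ n ih =>
    intro k m
    have h0 := hA (n+1) k m
    simp only [treeProd, treeAv] at *
    set a := ((2:ℝ) ^ d)⁻¹ * ∑ e : Fin d → Fin 2, treeAv (ind g) n (k + 1) (dyCh m e) with ha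
    have h1 : ((2:ℝ) ^ d)⁻¹ * ∑ e : Fin d → Fin 2,
        treeProd (wt (2 * K / (2 * K - 1)) g) n (k + 1) (dyCh m e) ≤ 1 + a / K := by
      calc _ ≤ ((2:ℝ) ^ d)⁻¹ * ∑ e : Fin d → Fin 2,
            (1 + treeAv (ind g) n (k + 1) (dyCh m e) / K) := by
            gcongr with e
            exact ih _ _
        _ = 1 + a / K := by
            rw [Finset.sum_add_distrib, mul_add, ← Finset.sum_div, ha]
            simp only [Finset.sum_const, Finset.card_univ, nsmul_eq_mul, card_ch]
            have : (2:ℝ)^d ≠ 0 := by positivity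
            field_simp
    simp only [wt, ind] at *
    split_ifs at * with h
    · calc _ ≤ 2 * K / (2 * K - 1) * (1 + a / K) := by
            gcongr
        _ = 2 * K / (2 * K - 1) * (1 + ((1 + a) - 1) / K) := by ring_nf
        _ ≤ _ := key _ h0
    · simpa using h1

lemma treeProd_nonneg {d : ℕ} (w : ℕ → (Fin d → ℤ) → ℝ) (hw : ∀ k m, 0 ≤ w k m) :
    ∀ n k m, 0 ≤ treeProd w n k m := by
  intro n
  induction n with
  | zero => intro k m; exact hw k m
  | succ n ih =>
    intro k m
    simp only [treeProd]
    have := hw k m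
    have : 0 ≤ ∑ e : Fin d → Fin 2, treeProd w n (k + 1) (dyCh m e) :=
      Finset.sum_nonneg fun e _ => ih _ _
    positivity

lemma exists_ch {d : ℕ} (n : ℕ) (m' m : Fin d → ℤ) (h : (fun i => m' i / 2 ^ (n+1)) = m) :
    ∃ e : Fin d → Fin 2, (fun i => m' i / 2 ^ n) = dyCh m e := by
  refine ⟨fun i => ⟨((m' i / 2 ^ n) % 2).toNat, by omega⟩, ?_⟩
  funext i
  have h1 : m' i / 2 ^ (n+1) = m' i / 2 ^ n / 2 := by
    rw [pow_succ, Int.ediv_ediv_of_nonneg (by positivity)]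
  have h2 : m i = m' i / 2 ^ n / 2 := by rw [← h1, ← h]
  simp only [dyCh, h2]
  omega

set_option maxHeartbeats 800000 in
open Classical in
lemma count_le {d : ℕ} (g : ℕ → (Fin d → ℤ) → Prop) (θ : ℝ) (hθ : 1 ≤ θ) :
    ∀ (n k : ℕ) (m : Fin d → ℤ) (s : ℕ) (S : Finset (Fin d → ℤ)),
      (∀ m' ∈ S, (fun i => m' i / 2 ^ n) = m ∧
        s ≤ ∑ i ∈ Finset.range (n+1), if g (k+i) (fun l => m' l / 2 ^ (n-i)) then 1 else 0) →
      (S.card : ℝ) * θ ^ s ≤ (2 ^ d) ^ n * treeProd (wt θ g) n k m := by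
  have hw : ∀ k m, 0 ≤ wt θ g k m := by
    intro k m; simp only [wt]; split_ifs <;> linarith
  intro n
  induction n with
  | zero =>
    intro k m s S hS
    rcases S.eq_empty_or_nonempty with rfl | ⟨m', hm'⟩
    · simpa using treeProd_nonneg _ hw 0 k m
    · have hc : S.card ≤ 1 := by
        rw [Finset.card_le_one]
        intro a ha b hb
        have h1 := (hS a ha).1
        have h2 := (hS b hb).1
        simp at h1 h2
        exact h1.trans h2.symm
      have h1 := hS m' hm'
      obtain ⟨h1, h2⟩ := h1
      simp only [zero_add, Finset.sum_range_one, pow_zero, Int.ediv_one, Nat.sub_zero,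
        add_zero] at h1 h2
      rw [show (fun l => m' l) = m from h1] at h2
      have h3 : θ ^ s ≤ wt θ g k m := by
        simp only [wt]
        split_ifs at * with h
        · calc θ ^ s ≤ θ ^ 1 := pow_le_pow_right₀ hθ h2
            _ = θ := pow_one _
        · have : s = 0 := by omega
          simp [this]
      have h4 : (S.card : ℝ) ≤ 1 := by exact_mod_cast hc
      simp only [treeProd, pow_zero, one_mul]
      calc (S.card : ℝ) * θ ^ s ≤ 1 * θ ^ s := by gcongr
        _ ≤ _ := by simpa using h3
  | succ n ih =>
    intro k m s S hS
    set t : ℕ := if g k m then 1 else 0 with ht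
    have hSe : ∀ e : Fin d → Fin 2,
        ((S.filter fun m' => (fun i => m' i / 2 ^ n) = dyCh m e).card : ℝ) * θ ^ (s - t) ≤
          (2 ^ d) ^ n * treeProd (wt θ g) n (k+1) (dyCh m e) := by
      intro e
      apply ih
      intro m' hm'
      rw [Finset.mem_filter] at hm'
      refine ⟨hm'.2, ?_⟩
      have h := hS m' hm'.1
      rw [Finset.sum_range_succ'] at h
      obtain ⟨h1, h2⟩ := h
      simp only [Nat.sub_zero, add_zero] at h2
      rw [h1, ← ht] at h2
      have h3 : ∀ i, (if g (k + (i+1)) (fun l => m' l / 2 ^ (n + 1 - (i+1))) then 1 else 0)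
        = if g (k + 1 + i) (fun l => m' l / 2 ^ (n - i)) then 1 else 0 := by
        intro i
        rw [show n + 1 - (i+1) = n - i by omega, show k + (i+1) = k + 1 + i by omega]
      simp only [h3] at h2
      omega
    have hcard : (S.card : ℝ) ≤ ∑ e : Fin d → Fin 2,
        ((S.filter fun m' => (fun i => m' i / 2 ^ n) = dyCh m e).card : ℝ) := by
      have : S ⊆ Finset.univ.biUnion
          (fun e : Fin d → Fin 2 => S.filter fun m' => (fun i => m' i / 2 ^ n) = dyCh m e) := by
        intro m' hm'
        obtain ⟨e, he⟩ := exists_ch n m' m (hS m' hm').1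
        simp only [Finset.mem_biUnion, Finset.mem_filter]
        exact ⟨e, Finset.mem_univ _, hm', he⟩
      exact_mod_cast (Finset.card_le_card this).trans Finset.card_biUnion_le
    have hst : θ ^ s ≤ wt θ g k m * θ ^ (s - t) := by
      have : wt θ g k m = θ ^ t := by
        by_cases h : g k m
        · rw [ht, if_pos h, wt, if_pos h, pow_one]
        · rw [ht, if_neg h, wt, if_neg h, pow_zero]
      rw [this, ← pow_add]
      exact pow_le_pow_right₀ hθ (by omega)
    have hw0 := hw k m
    calc (S.card : ℝ) * θ ^ s
        ≤ (∑ e : Fin d → Fin 2,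
          ((S.filter fun m' => (fun i => m' i / 2 ^ n) = dyCh m e).card : ℝ))
            * (wt θ g k m * θ ^ (s - t)) := by gcongr
      _ = wt θ g k m * ∑ e : Fin d → Fin 2,
          ((S.filter fun m' => (fun i => m' i / 2 ^ n) = dyCh m e).card : ℝ) * θ ^ (s - t) := by
          rw [← Finset.sum_mul]; ring
      _ ≤ wt θ g k m * ∑ e : Fin d → Fin 2,
          (2 ^ d) ^ n * treeProd (wt θ g) n (k+1) (dyCh m e) := by
          exact mul_le_mul_of_nonneg_left (Finset.sum_le_sum fun e _ => hSe e) hw0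
      _ = _ := by
          simp only [treeProd]
          rw [← Finset.mul_sum, pow_succ]
          generalize (∑ e : Fin d → Fin 2, treeProd (wt θ g) n (k+1) (dyCh m e)) = X
          have h2 : (2:ℝ)^d ≠ 0 := by positivity
          generalize (2:ℝ)^d = Y at *
          field_simp

/-- The tripled dyadic cube of level `k` and index `m`. -/
def tri {d : ℕ} (k : ℕ) (m : Fin d → ℤ) : Set (EuclideanSpace ℝ (Fin d)) :=
  {x | ∀ i, x i ∈ Set.Ico (((m i : ℝ) - 1) / 2 ^ k) (((m i : ℝ) + 2) / 2 ^ k)}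

lemma tri_ch {d : ℕ} (k : ℕ) (m : Fin d → ℤ) (e : Fin d → Fin 2) :
    tri (k+1) (dyCh m e) ⊆ tri k m := by
  intro x hx i
  have h := hx i
  have h2 : (0:ℝ) < 2 ^ k := by positivity
  have he : (0:ℝ) ≤ ((e i : ℕ) : ℝ) := by positivity
  have he' : ((e i : ℕ) : ℝ) ≤ 1 := by exact_mod_cast (show (e i : ℕ) ≤ 1 by omega)
  simp only [dyCh, Set.mem_Ico, pow_succ] at *
  rw [div_le_iff₀ (by positivity), lt_div_iff₀ (by positivity)] at *
  push_cast at h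
  constructor <;> nlinarith [h.1, h.2]

lemma volume_box {d : ℕ} (A : Fin d → Set ℝ) (hA : ∀ i, MeasurableSet (A i)) :
    MeasurableSet {x : EuclideanSpace ℝ (Fin d) | ∀ i, x i ∈ A i} ∧
    volume {x : EuclideanSpace ℝ (Fin d) | ∀ i, x i ∈ A i} = volume (Set.univ.pi A) := by
  have hm : MeasurableSet (Set.univ.pi A) := MeasurableSet.univ_pi hA
  have hp := EuclideanSpace.volume_preserving_symm_measurableEquiv_toLp (Fin d)
  have he : {x : EuclideanSpace ℝ (Fin d) | ∀ i, x i ∈ A i} =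
      (MeasurableEquiv.toLp 2 (Fin d → ℝ)).symm ⁻¹' (Set.univ.pi A) := by
    ext x
    simp [Set.mem_pi]
  rw [he]
  exact ⟨hp.measurable hm, hp.measure_preimage hm.nullMeasurableSet⟩

lemma cube_vol {d : ℕ} {Q : Set (EuclideanSpace ℝ (Fin d))} {s : ℝ} (h : IsCube Q s) :
    MeasurableSet Q ∧ volume Q = ENNReal.ofReal (s ^ d) := by
  obtain ⟨hs, a, rfl⟩ := h
  have := volume_box (fun i => Set.Ioo (a i) (a i + s)) (fun i => measurableSet_Ioo)
  refine ⟨this.1, this.2.trans ?_⟩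
  rw [Real.volume_pi_Ioo]
  simp [ENNReal.ofReal_pow hs.le]

lemma cube_nonempty {d : ℕ} {Q : Set (EuclideanSpace ℝ (Fin d))} {s : ℝ} (h : IsCube Q s) :
    Q.Nonempty := by
  obtain ⟨hs, a, rfl⟩ := h
  refine ⟨WithLp.toLp 2 (fun i => a i + s / 2), fun i => ?_⟩
  simp only [Set.mem_Ioo]
  constructor <;> linarith

lemma tri_vol {d : ℕ} (k : ℕ) (m : Fin d → ℤ) :
    volume (tri k m) = ENNReal.ofReal ((3 / 2 ^ k) ^ d) := by
  have := volume_box (fun i => Set.Ico (((m i : ℝ) - 1) / 2 ^ k) (((m i : ℝ) + 2) / 2 ^ k))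
    (fun i => measurableSet_Ico)
  refine this.2.trans ?_
  rw [Real.volume_pi_Ico]
  have h : ∀ i, ((m i : ℝ) + 2) / 2 ^ k - ((m i : ℝ) - 1) / 2 ^ k = 3 / 2 ^ k := by
    intro i; ring
  simp only [h, Finset.prod_const, Finset.card_univ, Fintype.card_fin]
  rw [ENNReal.ofReal_pow (by positivity)]

/-- Real volume. -/
def rvol {d : ℕ} (Q : Set (EuclideanSpace ℝ (Fin d))) : ℝ := (volume Q).toReal

lemma sum_rvol_le {d : ℕ} (T : Finset (Set (EuclideanSpace ℝ (Fin d))))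
    (hT : ∀ Q ∈ T, ∃ s, IsCube Q s) (hd : (T : Set (Set (EuclideanSpace ℝ (Fin d)))).Pairwise Disjoint)
    (k : ℕ) (m : Fin d → ℤ) (hsub : ∀ Q ∈ T, Q ⊆ tri k m) :
    ∑ Q ∈ T, rvol Q ≤ (3 / 2 ^ k) ^ d := by
  have h1 : ∑ Q ∈ T, volume Q ≤ ENNReal.ofReal ((3 / 2 ^ k) ^ d) := by
    rw [← tri_vol k m, ← measure_biUnion_finset (f := fun Q => Q)]
    · exact measure_mono (Set.iUnion₂_subset hsub)
    · exact hd
    · intro Q hQ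
      obtain ⟨s, hs⟩ := hT Q hQ
      exact (cube_vol hs).1
  have h2 : ∑ Q ∈ T, rvol Q = (∑ Q ∈ T, volume Q).toReal := by
    rw [ENNReal.toReal_sum]
    · rfl
    · intro Q hQ
      obtain ⟨s, hs⟩ := hT Q hQ
      rw [(cube_vol hs).2]
      exact ENNReal.ofReal_ne_top
  rw [h2]
  exact ENNReal.toReal_le_of_le_ofReal (by positivity) h1

lemma geom_sum_le (q : ℝ) (hq0 : 0 < q) (hq : q ≤ 1 / 2) (V δ : ℝ) (hV : 0 ≤ V) (hδ : 0 < δ) :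
    ∀ n k : ℕ, ∑ i ∈ Finset.range n, (if δ * q ^ (k + i) ≤ V then q ^ (k + i) else 0)
      ≤ 2 * V / δ := by
  intro n
  induction n with
  | zero => intro k; simp; positivity
  | succ n ih =>
    intro k
    by_cases h : δ * q ^ k ≤ V
    · have h1 : ∀ i ∈ Finset.range (n+1),
          (if δ * q ^ (k + i) ≤ V then q ^ (k + i) else 0) ≤ q ^ k * (1/2) ^ i := by
        intro i _
        have : q ^ (k+i) ≤ q ^ k * (1/2)^i := by
          rw [pow_add]; gcongr
        split_ifs
        · exact this
        · positivity
      have h2 : ∑ i ∈ Finset.range (n+1), ((1:ℝ)/2) ^ i ≤ 2 := by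
        rw [geom_sum_eq (by norm_num)]
        have : (0:ℝ) < (1/2)^(n+1) := by positivity
        rw [div_le_iff_of_neg (by norm_num)]
        linarith
      calc _ ≤ ∑ i ∈ Finset.range (n+1), q ^ k * (1/2) ^ i := Finset.sum_le_sum h1
        _ = q ^ k * ∑ i ∈ Finset.range (n+1), (1/2) ^ i := by rw [Finset.mul_sum]
        _ ≤ q ^ k * 2 := by gcongr
        _ ≤ _ := by rw [le_div_iff₀ hδ]; linarith
    · rw [Finset.sum_range_succ']
      simp only [add_zero, h, if_false]
      refine le_trans (le_of_eq ?_) (ih (k+1))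
      refine Finset.sum_congr rfl fun i _ => ?_
      rw [show k + (i+1) = k + 1 + i by omega]

/-- Indices of level `k` whose tripled cube may contain `y`. -/
def nearIdx {d : ℕ} (y : EuclideanSpace ℝ (Fin d)) (k : ℕ) : Finset (Fin d → ℤ) :=
  Fintype.piFinset fun i => Finset.Icc (⌊(2:ℝ) ^ k * y i⌋ - 1) (⌊(2:ℝ) ^ k * y i⌋ + 1)

lemma nearIdx_card {d : ℕ} (y : EuclideanSpace ℝ (Fin d)) (k : ℕ) :
    (nearIdx y k).card = 3 ^ d := by
  simp only [nearIdx, Fintype.card_piFinset, Int.card_Icc]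
  rw [Finset.prod_congr rfl (g := fun _ => 3) (fun i _ => by ring_nf; rfl)]
  simp

lemma mem_nearIdx {d : ℕ} (y : EuclideanSpace ℝ (Fin d)) (k : ℕ) (m : Fin d → ℤ)
    (h : y ∈ tri k m) : m ∈ nearIdx y k := by
  simp only [nearIdx, Fintype.mem_piFinset, Finset.mem_Icc]
  intro i
  have hi := h i
  simp only [Set.mem_Ico] at hi
  rw [div_le_iff₀ (by positivity), lt_div_iff₀ (by positivity)] at hi
  have h1 := Int.floor_le ((2:ℝ) ^ k * y i)
  have h2 := Int.lt_floor_add_one ((2:ℝ) ^ k * y i)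
  constructor
  · have : (⌊(2:ℝ) ^ k * y i⌋ : ℝ) < ((m i + 2 : ℤ) : ℝ) := by push_cast; nlinarith [hi.2]
    have := Int.cast_lt.1 this
    omega
  · have : (m i : ℝ) < ((⌊(2:ℝ) ^ k * y i⌋ + 2 : ℤ) : ℝ) := by push_cast; nlinarith [hi.1]
    have := Int.cast_lt.1 this
    omega

lemma treeAv_mono {d : ℕ} (b b' : ℕ → (Fin d → ℤ) → ℝ) (h : ∀ k m, b k m ≤ b' k m) :
    ∀ n k m, treeAv b n k m ≤ treeAv b' n k m := by
  intro n
  induction n with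
  | zero => intro k m; exact h k m
  | succ n ih =>
    intro k m
    simp only [treeAv]
    gcongr with e
    · exact h k m
    · exact ih _ _

lemma treeAv_sum {d : ℕ} {ι : Type*} (T : Finset ι) (a : ℝ) (b : ι → ℕ → (Fin d → ℤ) → ℝ) :
    ∀ n k m, treeAv (fun k m => a * ∑ Q ∈ T, b Q k m) n k m = a * ∑ Q ∈ T, treeAv (b Q) n k m := by
  intro n
  induction n with
  | zero => intro k m; rfl
  | succ n ih =>
    intro k m
    simp only [treeAv, ih]
    rw [Finset.sum_add_distrib, ← Finset.mul_sum, ← Finset.mul_sum, Finset.sum_comm]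
    ring

open Classical in
/-- Contribution of a single hole. -/
def holeInd {d : ℕ} (δ : ℝ) (Q : Set (EuclideanSpace ℝ (Fin d))) (k : ℕ) (m : Fin d → ℤ) : ℝ :=
  if Q ⊆ tri k m ∧ δ * (((2:ℝ) ^ d)⁻¹) ^ k ≤ rvol Q then 1 else 0

lemma treeAv_hole_zero {d : ℕ} (δ : ℝ) (Q : Set (EuclideanSpace ℝ (Fin d))) :
    ∀ n k m, ¬ Q ⊆ tri k m → treeAv (holeInd δ Q) n k m = 0 := by
  intro n
  induction n with
  | zero => intro k m h; simp [treeAv, holeInd, h]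
  | succ n ih =>
    intro k m h
    simp only [treeAv]
    rw [Finset.sum_eq_zero]
    · simp [holeInd, h]
    · intro e _
      exact ih _ _ fun h' => h (h'.trans (tri_ch k m e))

open Classical in
lemma treeAv_hole_le_aux {d : ℕ} (δ : ℝ) (Q : Set (EuclideanSpace ℝ (Fin d)))
    (y : EuclideanSpace ℝ (Fin d)) (hy : y ∈ Q) :
    ∀ n k m, treeAv (holeInd δ Q) n k m ≤ ∑ i ∈ Finset.range (n+1),
      (if δ * (((2:ℝ) ^ d)⁻¹) ^ (k + i) ≤ rvol Q then (((2:ℝ) ^ d)⁻¹) ^ i else 0) *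
        ((nearIdx y (k + i)).filter fun m' => (fun l => m' l / 2 ^ i) = m).card := by
  have hb : ∀ k m, holeInd δ Q k m ≤
      (if δ * (((2:ℝ) ^ d)⁻¹) ^ k ≤ rvol Q then 1 else 0) *
        ((nearIdx y k).filter fun m' => m' = m).card := by
    intro k m
    unfold holeInd
    by_cases h : Q ⊆ tri k m ∧ δ * (((2:ℝ) ^ d)⁻¹) ^ k ≤ rvol Q
    · rw [if_pos h, if_pos h.2, one_mul]
      have : 0 < ((nearIdx y k).filter fun m' => m' = m).card := by
        rw [Finset.card_pos]
        exact ⟨m, by simpa using mem_nearIdx y k m (h.1 hy)⟩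
      exact_mod_cast this
    · rw [if_neg h]
      split_ifs <;> positivity
  intro n
  induction n with
  | zero =>
    intro k m
    simpa [treeAv] using hb k m
  | succ n ih =>
    intro k m
    rw [Finset.sum_range_succ']
    simp only [treeAv]
    rw [add_comm (holeInd δ Q k m)]
    refine add_le_add ?_ ?_
    rotate_left
    · simpa using hb k m
    · calc _ ≤ ((2:ℝ) ^ d)⁻¹ * ∑ e : Fin d → Fin 2, ∑ i ∈ Finset.range (n+1),
            (if δ * (((2:ℝ) ^ d)⁻¹) ^ (k + 1 + i) ≤ rvol Q then (((2:ℝ) ^ d)⁻¹) ^ i else 0) *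
            ((nearIdx y (k + 1 + i)).filter fun m' => (fun l => m' l / 2 ^ i) = dyCh m e).card := by
            gcongr with e
            exact ih _ _
        _ ≤ _ := by
            rw [Finset.sum_comm, Finset.mul_sum]
            refine Finset.sum_le_sum fun i _ => ?_
            rw [← Finset.mul_sum, ← mul_assoc, show k + (i+1) = k + 1 + i by omega]
            have h1 : ∑ e : Fin d → Fin 2, (((nearIdx y (k + 1 + i)).filter
                fun m' => (fun l => m' l / 2 ^ i) = dyCh m e).card : ℝ) ≤
                ((nearIdx y (k + 1 + i)).filter fun m' => (fun l => m' l / 2 ^ (i+1)) = m).card := by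
              rw [← Nat.cast_sum, Nat.cast_le, ← Finset.card_biUnion]
              · apply Finset.card_le_card
                intro m' hm'
                simp only [Finset.mem_biUnion, Finset.mem_filter, Finset.mem_univ,
                  true_and] at hm' ⊢
                obtain ⟨e, h1, h2⟩ := hm'
                refine ⟨h1, ?_⟩
                funext l
                have h3 := congrFun h2 l
                simp only [dyCh] at h3
                rw [pow_succ, ← Int.ediv_ediv_of_nonneg (by positivity), h3]
                have := (e l).2
                omega
              · intro e _ e' _ hne
                rw [Function.onFun, Finset.disjoint_left]
                intro m' h1 h2
                rw [Finset.mem_filter] at h1 h2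
                apply hne
                have h3 := h1.2.symm.trans h2.2
                funext l
                have h4 := congrFun h3 l
                simp only [dyCh] at h4
                apply Fin.ext
                omega
            split_ifs with h
            · rw [pow_succ', mul_comm (((2:ℝ) ^ d)⁻¹)]
              gcongr
            · simp

lemma treeAv_hole_le {d : ℕ} (hd : 1 ≤ d) (δ : ℝ) (hδ : 0 < δ)
    (Q : Set (EuclideanSpace ℝ (Fin d))) (hQ : Q.Nonempty) (n k : ℕ) (m : Fin d → ℤ) :
    treeAv (holeInd δ Q) n k m ≤ ((2:ℝ) ^ d) ^ k * 3 ^ d * (2 * rvol Q / δ) := by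
  classical
  obtain ⟨y, hy⟩ := hQ
  refine (treeAv_hole_le_aux δ Q y hy n k m).trans ?_
  have hq : ((2:ℝ) ^ d)⁻¹ ≤ 1 / 2 := by
    rw [one_div]
    apply inv_anti₀ (by norm_num)
    calc (2:ℝ) = 2 ^ 1 := by norm_num
      _ ≤ 2 ^ d := pow_le_pow_right₀ (by norm_num) hd
  have hg := geom_sum_le (((2:ℝ) ^ d)⁻¹) (by positivity) hq (rvol Q) δ
    ENNReal.toReal_nonneg hδ (n+1) k
  refine le_trans ?_ (mul_le_mul_of_nonneg_left hg (by positivity))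
  rw [Finset.mul_sum]
  refine Finset.sum_le_sum fun i _ => ?_
  have hc : (((nearIdx y (k + i)).filter fun m' => (fun l => m' l / 2 ^ i) = m).card : ℝ)
      ≤ 3 ^ d := by
    have := Finset.card_filter_le (nearIdx y (k+i)) (fun m' => (fun l => m' l / 2 ^ i) = m)
    rw [nearIdx_card] at this
    exact_mod_cast this
  split_ifs with h
  · rw [pow_add]
    have h2 : ((2:ℝ) ^ d) ^ k * (((2:ℝ) ^ d)⁻¹) ^ k = 1 := by
      rw [← mul_pow, mul_inv_cancel₀ (by positivity), one_pow]
    calc _ ≤ (((2:ℝ) ^ d)⁻¹) ^ i * 3 ^ d := by gcongr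
      _ = (((2:ℝ) ^ d) ^ k * (((2:ℝ) ^ d)⁻¹) ^ k) * (((2:ℝ) ^ d)⁻¹) ^ i * 3 ^ d := by
          rw [h2, one_mul]
      _ = _ := by ring
  · simp

open Classical in
/-- Good nodes: at least `lam` large holes in the tripled cube. -/
def goodNode {d : ℕ} (T : Finset (Set (EuclideanSpace ℝ (Fin d)))) (δ lam : ℝ)
    (k : ℕ) (m : Fin d → ℤ) : Prop :=
  lam ≤ ((T.filter fun Q => Q ⊆ tri k m ∧ δ * (((2:ℝ) ^ d)⁻¹) ^ k ≤ rvol Q).card : ℝ)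

lemma packing {d : ℕ} (hd : 1 ≤ d) (T : Finset (Set (EuclideanSpace ℝ (Fin d))))
    (hT : ∀ Q ∈ T, ∃ s, IsCube Q s)
    (hdis : (T : Set (Set (EuclideanSpace ℝ (Fin d)))).Pairwise Disjoint)
    (δ lam : ℝ) (hδ : 0 < δ) (hlam : 0 < lam) (n k : ℕ) (m : Fin d → ℤ) :
    treeAv (ind (goodNode T δ lam)) n k m ≤ 2 * 9 ^ d / (δ * lam) := by
  classical
  have h1 : ∀ k m, ind (goodNode T δ lam) k m ≤ lam⁻¹ * ∑ Q ∈ T, holeInd δ Q k m := by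
    intro k m
    have h2 : ∑ Q ∈ T, holeInd δ Q k m =
        ((T.filter fun Q => Q ⊆ tri k m ∧ δ * (((2:ℝ) ^ d)⁻¹) ^ k ≤ rvol Q).card : ℝ) := by
      simp only [holeInd]
      rw [Finset.sum_boole]
    rw [h2]
    unfold ind
    split_ifs with h
    · rw [inv_mul_eq_div, le_div_iff₀ hlam, one_mul]
      exact h
    · positivity
  have h3 : ∑ Q ∈ T, treeAv (holeInd δ Q) n k m ≤
      ((2:ℝ) ^ d) ^ k * 3 ^ d * (2 / δ) * (3 / 2 ^ k) ^ d := by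
    rw [← Finset.sum_filter_of_ne (p := fun Q => Q ⊆ tri k m)]
    · calc _ ≤ ∑ Q ∈ T.filter (fun Q => Q ⊆ tri k m),
            ((2:ℝ) ^ d) ^ k * 3 ^ d * (2 / δ) * rvol Q := by
            refine Finset.sum_le_sum fun Q hQ => ?_
            obtain ⟨s, hs⟩ := hT Q (Finset.mem_filter.1 hQ).1
            refine (treeAv_hole_le hd δ hδ Q (cube_nonempty hs) n k m).trans (le_of_eq ?_)
            ring
        _ = ((2:ℝ) ^ d) ^ k * 3 ^ d * (2 / δ) * ∑ Q ∈ T.filter (fun Q => Q ⊆ tri k m), rvol Q := by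
            rw [Finset.mul_sum]
        _ ≤ _ := by
            gcongr
            apply sum_rvol_le _ _ _ k m
            · intro Q hQ; exact (Finset.mem_filter.1 hQ).2
            · intro Q hQ; exact hT Q (Finset.mem_filter.1 hQ).1
            · exact hdis.mono (fun Q hQ => (Finset.mem_filter.1 hQ).1)
    · intro Q _ hne
      by_contra h
      exact hne (treeAv_hole_zero δ Q n k m h)
  calc _ ≤ lam⁻¹ * ∑ Q ∈ T, treeAv (holeInd δ Q) n k m := by
        rw [← treeAv_sum]
        exact treeAv_mono _ _ h1 n k m
    _ ≤ lam⁻¹ * (((2:ℝ) ^ d) ^ k * 3 ^ d * (2 / δ) * (3 / 2 ^ k) ^ d) := by gcongr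
    _ = _ := by
        rw [div_pow, ← pow_mul, ← pow_mul, mul_comm k d, show (9:ℝ) = 3 * 3 by norm_num, mul_pow]
        have : (2:ℝ) ^ (d * k) ≠ 0 := by positivity
        generalize (2:ℝ) ^ (d * k) = X at *
        field_simp

/-- Index of the dyadic cube of level `k` containing `x`. -/
def idxOf {d : ℕ} (k : ℕ) (x : EuclideanSpace ℝ (Fin d)) : Fin d → ℤ :=
  fun i => ⌊(2:ℝ) ^ k * x i⌋

lemma idxOf_div {d : ℕ} (J k : ℕ) (h : k ≤ J) (x : EuclideanSpace ℝ (Fin d)) :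
    (fun l => idxOf J x l / 2 ^ (J - k)) = idxOf k x := by
  funext l
  simp only [idxOf]
  have h1 : ((2:ℝ) ^ J * x l) = (((2 ^ (J-k) : ℕ) : ℝ)) * ((2:ℝ) ^ k * x l) := by
    push_cast
    rw [← mul_assoc, ← pow_add, Nat.sub_add_cancel h]
  have h2 := Int.natCast_mul_floor_div_cancel (n := 2 ^ (J-k)) (by positivity) ((2:ℝ) ^ k * x l)
  rw [← h1] at h2
  exact_mod_cast h2

lemma idxOf_finite {d : ℕ} (k : ℕ) (E : Set (EuclideanSpace ℝ (Fin d))) (hE : IsCompact E) :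
    (idxOf k '' E).Finite := by
  obtain ⟨R, hR⟩ := hE.isBounded.exists_norm_le
  refine Set.Finite.subset (Finset.finite_toSet
    (Fintype.piFinset fun _ : Fin d => Finset.Icc ⌊-((2:ℝ) ^ k * R)⌋ ⌊(2:ℝ) ^ k * R⌋)) ?_
  rintro _ ⟨x, hx, rfl⟩
  simp only [Finset.mem_coe, Fintype.mem_piFinset, Finset.mem_Icc, idxOf]
  intro i
  have h1 : |x i| ≤ R := by
    have := PiLp.norm_apply_le x i
    rw [Real.norm_eq_abs] at this
    exact this.trans (hR x hx)
  rw [abs_le] at h1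
  have h2 : (0:ℝ) < 2 ^ k := by positivity
  constructor <;> apply Int.floor_le_floor <;> nlinarith [h1.1, h1.2]

lemma ball_sub_tri {d : ℕ} (k : ℕ) (x : EuclideanSpace ℝ (Fin d)) :
    Metric.ball x ((2:ℝ) ^ k)⁻¹ ⊆ tri k (idxOf k x) := by
  intro y hy i
  rw [Metric.mem_ball, dist_eq_norm] at hy
  have h1 : |y i - x i| < ((2:ℝ) ^ k)⁻¹ := by
    have := PiLp.norm_apply_le (y - x) i
    rw [Real.norm_eq_abs] at this
    exact lt_of_le_of_lt (by simpa using this) hy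
  have h2 : (0:ℝ) < 2 ^ k := by positivity
  rw [abs_lt] at h1
  have h3 : (2:ℝ) ^ k * ((2:ℝ) ^ k)⁻¹ = 1 := mul_inv_cancel₀ h2.ne'
  have h4 := Int.floor_le ((2:ℝ) ^ k * x i)
  have h5 := Int.lt_floor_add_one ((2:ℝ) ^ k * x i)
  simp only [idxOf, Set.mem_Ico]
  rw [div_le_iff₀ h2, lt_div_iff₀ h2]
  constructor <;> nlinarith [h1.1, h1.2]

lemma cover_card {d : ℕ} (hd : 1 ≤ d) (c ε : ℝ) (hc : 0 < c) (hε : 0 < ε)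
    (E : Set (EuclideanSpace ℝ (Fin d))) (hE : IsCompact E)
    (D : Set (Set (EuclideanSpace ℝ (Fin d)))) (hD : D.Pairwise Disjoint)
    (s : ℕ) (K : ℝ) (hK : K = 2 * 9 ^ d / (ε ^ d * (c * ε⁻¹))) (hK1 : 1 ≤ K)
    (hp : ∀ x ∈ E, (((2 * s : ℕ) : ℝ)) / 2 < ({k : ℕ | k ∈ Finset.Icc 1 (2 * s) ∧
        ∃ S : Finset (Set (EuclideanSpace ℝ (Fin d))), c * ε⁻¹ ≤ S.card ∧
          ∀ Q ∈ S, Q ∈ D ∧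
            Q ⊆ Metric.ball x ((2:ℝ) ^ (-(k:ℝ))) \ Metric.ball x ((2:ℝ) ^ (-(k:ℝ) - 1)) ∧
            ∃ s, ε * ((2:ℝ) ^ (-(k:ℝ))) ≤ s ∧ IsCube Q s}).ncard) :
    ((idxOf_finite (2 * s) E hE).toFinset.card : ℝ) * (2 * K / (2 * K - 1)) ^ s ≤
      ((idxOf_finite 0 E hE).toFinset.card : ℝ) * ((2 ^ d) ^ (2 * s) * 2) := by
  classical
  set S := (idxOf_finite (2 * s) E hE).toFinset with hS
  set S0 := (idxOf_finite 0 E hE).toFinset with hS0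
  have hθ : 1 ≤ 2 * K / (2 * K - 1) := by
    rw [le_div_iff₀ (by linarith)]; linarith
  have hrep : ∀ m ∈ S, ∃ x ∈ E, idxOf (2 * s) x = m := by
    intro m hm
    simpa [hS] using hm
  choose! rep hrepE hrepm using hrep
  set P : EuclideanSpace ℝ (Fin d) → ℕ → Finset (Set (EuclideanSpace ℝ (Fin d))) → Prop :=
    fun x k S => c * ε⁻¹ ≤ S.card ∧
          ∀ Q ∈ S, Q ∈ D ∧
            Q ⊆ Metric.ball x ((2:ℝ) ^ (-(k:ℝ))) \ Metric.ball x ((2:ℝ) ^ (-(k:ℝ) - 1)) ∧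
            ∃ s, ε * ((2:ℝ) ^ (-(k:ℝ))) ≤ s ∧ IsCube Q s with hP
  have hch : ∀ x k, ∃ S : Finset (Set (EuclideanSpace ℝ (Fin d))),
      ((∃ S, P x k S) → P x k S) ∧ ((¬ ∃ S, P x k S) → S = ∅) := by
    intro x k
    by_cases h : ∃ S, P x k S
    · obtain ⟨S, hS⟩ := h
      exact ⟨S, fun _ => hS, fun h => absurd ⟨S, hS⟩ h⟩
    · exact ⟨∅, fun h' => absurd h' h, fun _ => rfl⟩
  choose Sc hSc1 hSc2 using hch
  have hScQ : ∀ x k, ∀ Q ∈ Sc x k, Q ∈ D ∧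
            Q ⊆ Metric.ball x ((2:ℝ) ^ (-(k:ℝ))) \ Metric.ball x ((2:ℝ) ^ (-(k:ℝ) - 1)) ∧
            ∃ s, ε * ((2:ℝ) ^ (-(k:ℝ))) ≤ s ∧ IsCube Q s := by
    intro x k Q hQ
    by_cases h : ∃ S, P x k S
    · exact (hSc1 x k h).2 Q hQ
    · rw [hSc2 x k h] at hQ; simp at hQ
  set T := S.biUnion fun m => (Finset.range (2 * s + 1)).biUnion fun k => Sc (rep m) k with hTdef
  have hTmem : ∀ Q ∈ T, Q ∈ D ∧ ∃ s, IsCube Q s := by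
    intro Q hQ
    simp only [hTdef, Finset.mem_biUnion] at hQ
    obtain ⟨m, _, k, _, hQ⟩ := hQ
    obtain ⟨h1, _, t, _, h2⟩ := hScQ _ _ _ hQ
    exact ⟨h1, t, h2⟩
  set g := goodNode T (ε ^ d) (c * ε⁻¹) with hg
  have hA : ∀ n k m, treeAv (ind g) n k m ≤ K := by
    intro n k m
    rw [hK]
    exact packing hd T (fun Q hQ => (hTmem Q hQ).2) (hD.mono fun Q hQ => (hTmem Q hQ).1)
      _ _ (by positivity) (by positivity) n k m
  have hF : ∀ n k m, treeProd (wt (2 * K / (2 * K - 1)) g) n k m ≤ 2 := by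
    intro n k m
    refine (treeProd_le g K hK1 hA n k m).trans ?_
    have : treeAv (ind g) n k m / K ≤ 1 := by
      rw [div_le_one (by linarith)]; exact hA n k m
    linarith
  have hgood : ∀ m ∈ S, ∀ k ∈ Finset.range (2 * s + 1), (∃ S, P (rep m) k S) →
      g k (idxOf k (rep m)) := by
    intro m hm k hk h
    have h1 := hSc1 _ _ h
    rw [hg]
    unfold goodNode
    refine h1.1.trans ?_
    rw [Nat.cast_le]
    apply Finset.card_le_card
    intro Q hQ
    obtain ⟨_, hQ2, t, ht, hcube⟩ := hScQ _ _ _ hQ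
    have hpow : (2:ℝ) ^ (-(k:ℝ)) = ((2:ℝ) ^ k)⁻¹ := by
      rw [Real.rpow_neg (by norm_num), Real.rpow_natCast]
    rw [hpow] at hQ2 ht
    rw [Finset.mem_filter]
    refine ⟨?_, ?_, ?_⟩
    · simp only [hTdef, Finset.mem_biUnion]
      exact ⟨m, hm, k, hk, hQ⟩
    · exact hQ2.trans (Set.sdiff_subset.trans (ball_sub_tri k _))
    · rw [rvol, (cube_vol hcube).2, ENNReal.toReal_ofReal (pow_nonneg hcube.1.le d)]
      calc ε ^ d * (((2:ℝ) ^ d)⁻¹) ^ k = (ε * ((2:ℝ) ^ k)⁻¹) ^ d := by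
            rw [mul_pow, inv_pow, inv_pow, ← pow_mul, ← pow_mul, mul_comm d k]
        _ ≤ t ^ d := by gcongr
  have hroot : ∀ r : Fin d → ℤ,
      ((S.filter fun m => (fun i => m i / 2 ^ (2 * s)) = r).card : ℝ) * (2 * K / (2 * K - 1)) ^ s
        ≤ (2 ^ d) ^ (2 * s) * 2 := by
    intro r
    refine (count_le g _ hθ (2 * s) 0 r s _ ?_).trans
      (mul_le_mul_of_nonneg_left (hF _ _ _) (by positivity))
    intro m hm
    rw [Finset.mem_filter] at hm
    refine ⟨hm.2, ?_⟩
    have h1 := hp (rep m) (hrepE m hm.1)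
    have h2 : ({k : ℕ | k ∈ Finset.Icc 1 (2 * s) ∧ ∃ S, P (rep m) k S}).ncard ≤
        ((Finset.range (2 * s + 1)).filter
          fun i => g (0 + i) (fun l => m l / 2 ^ (2 * s - i))).card := by
      rw [← Set.ncard_coe_finset]
      apply Set.ncard_le_ncard _ (Finset.finite_toSet _)
      rintro k ⟨hk, hk2⟩
      rw [Finset.mem_Icc] at hk
      have hk3 : k ∈ Finset.range (2 * s + 1) := by rw [Finset.mem_range]; omega
      rw [Finset.mem_coe, Finset.mem_filter]
      refine ⟨hk3, ?_⟩
      have h3 := hgood m hm.1 k hk3 hk2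
      rw [← idxOf_div (2 * s) k hk.2, hrepm m hm.1] at h3
      rwa [zero_add]
    rw [Finset.sum_boole]
    have h4 : (s:ℝ) < ({k : ℕ | k ∈ Finset.Icc 1 (2 * s) ∧ ∃ S, P (rep m) k S}).ncard := by
      refine lt_of_eq_of_lt ?_ h1
      push_cast; ring
    have h5 := Nat.cast_lt.1 h4
    simpa using (h5.le.trans h2)
  have hcard : (S.card : ℝ) ≤ ∑ r ∈ S0,
      ((S.filter fun m => (fun i => m i / 2 ^ (2 * s)) = r).card : ℝ) := by
    have : S ⊆ S0.biUnion fun r => S.filter fun m => (fun i => m i / 2 ^ (2 * s)) = r := by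
      intro m hm
      simp only [Finset.mem_biUnion, Finset.mem_filter]
      refine ⟨idxOf 0 (rep m), ?_, hm, ?_⟩
      · rw [hS0, Set.Finite.mem_toFinset]
        exact ⟨_, hrepE m hm, rfl⟩
      · have := idxOf_div (2 * s) 0 (by omega) (rep m)
        rw [hrepm m hm] at this
        exact this
    exact_mod_cast (Finset.card_le_card this).trans Finset.card_biUnion_le
  have hθ0 : (0:ℝ) ≤ (2 * K / (2 * K - 1)) ^ s := by positivity
  calc _ ≤ (∑ r ∈ S0, ((S.filter fun m => (fun i => m i / 2 ^ (2 * s)) = r).card : ℝ)) *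
          (2 * K / (2 * K - 1)) ^ s := mul_le_mul_of_nonneg_right hcard hθ0
    _ = ∑ r ∈ S0, ((S.filter fun m => (fun i => m i / 2 ^ (2 * s)) = r).card : ℝ) *
          (2 * K / (2 * K - 1)) ^ s := by rw [Finset.sum_mul]
    _ ≤ ∑ r ∈ S0, ((2 ^ d) ^ (2 * s) * 2 : ℝ) := Finset.sum_le_sum fun r _ => hroot r
    _ = _ := by rw [Finset.sum_const, nsmul_eq_mul]

lemma theta_ge (K : ℝ) (hK1 : 1 ≤ K) (η : ℝ) (hη : η = 1 / (4 * K)) :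
    (4:ℝ) ^ η ≤ 2 * K / (2 * K - 1) := by
  have hη0 : 0 < η := by rw [hη]; positivity
  have hη2 : 2 * η * (2 * K) = 1 := by rw [hη]; field_simp; norm_num
  have hlog : Real.log 4 ≤ 2 := by
    have : Real.log 4 = 2 * Real.log 2 := by
      rw [show (4:ℝ) = 2 ^ 2 by norm_num, Real.log_pow]; norm_num
    rw [this]
    linarith [Real.log_two_lt_d9]
  rw [Real.rpow_def_of_pos (by norm_num)]
  have h1 : Real.exp (Real.log 4 * η) ≤ Real.exp (2 * η) :=
    Real.exp_le_exp.2 (by nlinarith)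
  refine h1.trans ?_
  have h2 := Real.add_one_le_exp (-(2 * η))
  have h3 : Real.exp (2 * η) * Real.exp (-(2 * η)) = 1 := by
    rw [← Real.exp_add]; simp
  have h4 := Real.exp_pos (2 * η)
  rw [le_div_iff₀ (by linarith)]
  have h5 : Real.exp (2 * η) * (1 - 2 * η) ≤ 1 := by nlinarith
  calc Real.exp (2 * η) * (2 * K - 1)
      = Real.exp (2 * η) * (2 * K - 2 * η * (2 * K)) := by rw [hη2]
    _ = 2 * K * (Real.exp (2 * η) * (1 - 2 * η)) := by ring
    _ ≤ 2 * K * 1 := by gcongr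
    _ = 2 * K := mul_one _

lemma numeric_bound (d : ℕ) (δ η K N R0 : ℝ) (hδ : δ = (d:ℝ) - η) (hK1 : 1 ≤ K) (hR : 0 ≤ R0)
    (h4 : (4:ℝ) ^ η ≤ 2 * K / (2 * K - 1)) (s : ℕ)
    (hcc : N * (2 * K / (2 * K - 1)) ^ s ≤ R0 * ((2 ^ d) ^ (2 * s) * 2)) :
    N * ((d:ℝ) * ((2:ℝ) ^ (2 * s))⁻¹) ^ δ ≤ 2 * R0 * (d:ℝ) ^ δ := by
  set θ := 2 * K / (2 * K - 1) with hθ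
  have hθ0 : 0 < θ := lt_of_lt_of_le (by positivity) h4
  set X : ℝ := (2:ℝ) ^ (2 * s) with hX
  have hX0 : 0 < X := by positivity
  have h1 : ((2:ℝ) ^ d) ^ (2 * s) = X ^ (d:ℝ) := by
    rw [Real.rpow_natCast, hX, ← pow_mul, ← pow_mul, mul_comm]
  have h2 : X ^ η ≤ θ ^ s := by
    calc X ^ η = ((4:ℝ) ^ η) ^ s := by
          rw [hX, pow_mul, ← Real.rpow_natCast, ← Real.rpow_mul (by norm_num), mul_comm,
            Real.rpow_mul (by norm_num), Real.rpow_natCast]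
          norm_num
      _ ≤ θ ^ s := by gcongr
  have h3 : X ^ (d:ℝ) = X ^ η * X ^ δ := by
    rw [← Real.rpow_add hX0, hδ]; congr 1; ring
  have hXδ : 0 < X ^ δ := by positivity
  have hθs : 0 < θ ^ s := by positivity
  rw [h1, h3] at hcc
  have h5 : N ≤ 2 * R0 * X ^ δ := by
    have : N * θ ^ s ≤ (2 * R0 * X ^ δ) * θ ^ s := by
      calc N * θ ^ s ≤ R0 * (X ^ η * X ^ δ * 2) := hcc
        _ ≤ R0 * (θ ^ s * X ^ δ * 2) := by gcongr
        _ = _ := by ring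
    exact le_of_mul_le_mul_right this hθs
  rw [Real.mul_rpow (by positivity) (by positivity), Real.inv_rpow hX0.le]
  have hdδ : 0 ≤ (d:ℝ) ^ δ := by positivity
  calc N * ((d:ℝ) ^ δ * (X ^ δ)⁻¹) ≤ (2 * R0 * X ^ δ) * ((d:ℝ) ^ δ * (X ^ δ)⁻¹) := by gcongr
    _ = _ := by field_simp

lemma cell_diam {d : ℕ} (hd : 1 ≤ d) (J : ℕ) (m : Fin d → ℤ) :
    Metric.ediam {x : EuclideanSpace ℝ (Fin d) | idxOf J x = m} ≤
      ENNReal.ofReal ((d:ℝ) * ((2:ℝ) ^ J)⁻¹) := by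
  refine Metric.ediam_le fun x hx y hy => ?_
  rw [edist_dist]
  apply ENNReal.ofReal_le_ofReal
  have hd1 : (1:ℝ) ≤ d := by exact_mod_cast hd
  have h2 : (0:ℝ) < 2 ^ J := by positivity
  rw [EuclideanSpace.dist_eq]
  apply Real.sqrt_le_iff.2 ⟨by positivity, ?_⟩
  calc ∑ i, dist (x i) (y i) ^ 2 ≤ ∑ i : Fin d, (((2:ℝ) ^ J)⁻¹) ^ 2 := by
        refine Finset.sum_le_sum fun i _ => ?_
        have h := (congrFun hx i).trans (congrFun hy i).symm
        simp only [idxOf] at h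
        have h3 := Int.abs_sub_lt_one_of_floor_eq_floor h
        rw [← mul_sub, abs_mul, abs_of_pos h2] at h3
        have h4 : dist (x i) (y i) ≤ ((2:ℝ) ^ J)⁻¹ := by
          rw [Real.dist_eq, ← one_div, le_div_iff₀ h2]
          linarith
        gcongr
    _ = (d:ℝ) * (((2:ℝ) ^ J)⁻¹) ^ 2 := by simp
    _ ≤ _ := by
        rw [mul_pow]
        gcongr
        nlinarith

/-- **Nieminen's dimension estimate for weakly mean porous sets.** For every `d ≥ 1`
and `c > 0` there is a constant `C(d,c) > 0` such that every compact set `E ⊆ ℝ^d`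
that is weakly mean porous with parameters `α(t) = ε·t` and `λ(k) = c·ε⁻¹` satisfies
`dim_H(E) ≤ d - C(d,c)·ε^(d-1)`. -/
theorem dimH_le_of_weaklyMeanPorous (d : ℕ) (hd : 1 ≤ d) (c : ℝ) (hc : 0 < c) :
    ∃ Cdc : ℝ, 0 < Cdc ∧ ∀ ε : ℝ, 0 < ε → ε < 1 →
      ∀ E : Set (EuclideanSpace ℝ (Fin d)), IsCompact E →
        WeaklyMeanPorous E (fun t => ε * t) (fun _ => c * ε⁻¹) →
        dimH E ≤ ENNReal.ofReal ((d : ℝ) - Cdc * ε ^ (d - 1)) := by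
  classical
  set c' := min c 1 with hc'
  have hc'0 : 0 < c' := lt_min hc one_pos
  have hc'1 : c' ≤ 1 := min_le_right _ _
  have h9 : (9:ℝ) ≤ 9 ^ d := by
    calc (9:ℝ) = 9 ^ 1 := by norm_num
      _ ≤ 9 ^ d := pow_le_pow_right₀ (by norm_num) hd
  refine ⟨c' / (8 * 9 ^ d), by positivity, ?_⟩
  intro ε hε hε1 E hE ⟨D, j₀, _, hDQ, hD, hp⟩
  set K : ℝ := 2 * 9 ^ d / (ε ^ d * (c' * ε⁻¹)) with hK
  have hεd : ε ^ d * (c' * ε⁻¹) = c' * ε ^ (d - 1) := by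
    obtain ⟨e, rfl⟩ : ∃ e, d = e + 1 := ⟨d - 1, by omega⟩
    rw [pow_succ, Nat.add_sub_cancel]
    field_simp
  have hεd1 : ε ^ (d-1) ≤ 1 := pow_le_one₀ hε.le hε1.le
  have hεd0 : 0 < ε ^ (d-1) := by positivity
  have hKge : 18 ≤ K := by
    rw [hK, hεd, le_div_iff₀ (by positivity)]
    nlinarith [mul_le_one₀ hc'1 hεd0.le hεd1]
  have hK1 : 1 ≤ K := by linarith
  set η : ℝ := c' / (8 * 9 ^ d) * ε ^ (d - 1) with hη
  have hηK : η = 1 / (4 * K) := by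
    rw [hη, hK, hεd]
    field_simp
    norm_num
  have hη0 : 0 < η := by rw [hη]; positivity
  have hη1 : η ≤ 1 := by
    rw [hηK, div_le_one (by linarith)]; linarith
  set δ : ℝ := (d:ℝ) - η with hδ
  have hd1 : (1:ℝ) ≤ d := by exact_mod_cast hd
  have hδ0 : 0 ≤ δ := by rw [hδ]; linarith
  set R0 : ℝ := ((idxOf_finite 0 E hE).toFinset.card : ℝ) with hR0
  have hR00 : 0 ≤ R0 := by positivity
  have h4 : (4:ℝ) ^ η ≤ 2 * K / (2 * K - 1) := theta_ge K hK1 η hηK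
  -- the covering bound
  have hcov : ∀ s : ℕ, j₀ ≤ s →
      ((idxOf_finite (2 * s) E hE).toFinset.card : ℝ) * ((d:ℝ) * ((2:ℝ) ^ (2 * s))⁻¹) ^ δ
        ≤ 2 * R0 * (d:ℝ) ^ δ := by
    intro s hs
    have hcc := cover_card hd c' ε hc'0 hε E hE D hD s K hK hK1 (by
      intro x hx
      refine lt_of_lt_of_le (hp x hx (2 * s) (by omega)) ?_
      rw [Nat.cast_le]
      apply Set.ncard_le_ncard
      · rintro k ⟨hk, S, hS1, hS2⟩
        refine ⟨hk, S, le_trans ?_ hS1, hS2⟩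
        exact mul_le_mul_of_nonneg_right (min_le_left _ _) (by positivity)
      · exact (Finset.finite_toSet (Finset.Icc 1 (2 * s))).subset fun k hk => hk.1)
    exact numeric_bound d δ η K _ R0 hδ hK1 hR00 h4 s hcc
  have hmeas : Measure.hausdorffMeasure δ E ≤ ENNReal.ofReal (2 * R0 * (d:ℝ) ^ δ) := by
    refine (Measure.hausdorffMeasure_le_liminf_sum (l := Filter.atTop) δ E
      (fun s : ℕ => ENNReal.ofReal ((d:ℝ) * ((2:ℝ) ^ (2 * s))⁻¹)) ?_
      (ι := fun s => {m // m ∈ (idxOf_finite (2 * s) E hE).toFinset})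
      (fun s m => {x | idxOf (2 * s) x = m.1}) ?_ ?_).trans ?_
    · rw [← ENNReal.ofReal_zero]
      apply ENNReal.tendsto_ofReal
      have h1 : Filter.Tendsto (fun s : ℕ => (d:ℝ) * ((1/4:ℝ)) ^ s) Filter.atTop (nhds ((d:ℝ) * 0)) :=
        (tendsto_pow_atTop_nhds_zero_of_lt_one (by norm_num) (by norm_num)).const_mul _
      rw [mul_zero] at h1
      refine h1.congr fun s => ?_
      rw [pow_mul, ← inv_pow]
      norm_num
    · exact Filter.Eventually.of_forall fun s m => cell_diam hd _ _
    · refine Filter.Eventually.of_forall fun s x hx => ?_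
      rw [Set.mem_iUnion]
      refine ⟨⟨idxOf (2 * s) x, ?_⟩, rfl⟩
      rw [Set.Finite.mem_toFinset]
      exact ⟨x, hx, rfl⟩
    · refine Filter.liminf_le_of_frequently_le' (Filter.Eventually.frequently ?_)
      filter_upwards [Filter.eventually_ge_atTop j₀] with s hs
      calc _ ≤ ∑ m : {m // m ∈ (idxOf_finite (2 * s) E hE).toFinset},
            ENNReal.ofReal ((d:ℝ) * ((2:ℝ) ^ (2 * s))⁻¹) ^ δ :=
            Finset.sum_le_sum fun m _ => ENNReal.rpow_le_rpow (cell_diam hd _ _) hδ0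
        _ = ENNReal.ofReal (((idxOf_finite (2 * s) E hE).toFinset.card : ℝ) *
              ((d:ℝ) * ((2:ℝ) ^ (2 * s))⁻¹) ^ δ) := by
            rw [Finset.sum_const, nsmul_eq_mul, Finset.card_univ, Fintype.card_coe,
              ENNReal.ofReal_rpow_of_nonneg (by positivity) hδ0,
              ENNReal.ofReal_mul (by positivity), ENNReal.ofReal_natCast]
        _ ≤ _ := ENNReal.ofReal_le_ofReal (hcov s hs)
  have hfin : dimH E ≤ ((Real.toNNReal δ : NNReal) : ENNReal) := by
    apply dimH_le_of_hausdorffMeasure_ne_top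
    rw [Real.coe_toNNReal δ hδ0]
    exact ne_top_of_le_ne_top ENNReal.ofReal_ne_top hmeas
  exact hfin
end
end

section
/- For every J ∈ (0, 1/2) there exists a Jordan domain Ω ⊂ ℝ² that is a J-John domain and whose boundary satisfies dim_H(∂Ω) ≥ 2 − (2/log 2)·J. -/
open Metric Set MeasureTheory

noncomputable section

namespace KK

/-- Geometric parameters of the construction. -/
structure Par where
  r : ℝ
  ε : ℝ
  b : ℝ
  J : ℝ
  hr : 0 < r
  hε : 0 < ε
  hb : 0 < b
  hsum : 2 * r + 4 * ε + b = 1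
  hJ : 0 < J
  hJ1 : J ≤ 1 / 2
  hba : b + 4 * ε ≤ 1 / 2
  hJb : J ^ 2 * (1 + (b + 4 * ε) ^ 2) ≤ b ^ 2

variable (p : Par)

lemma Par.hr4 : 1 / 4 ≤ p.r := by have := p.hsum; have := p.hba; linarith
lemma Par.hr2 : p.r < 1 / 2 := by have := p.hsum; have := p.hb; have := p.hε; linarith

/-- The four similarities. -/
def φ (j : Fin 4) (z : ℂ) : ℂ :=
  (p.r : ℂ) * (![1, Complex.I, -Complex.I, 1] j) * z +
    ![⟨p.ε, p.ε⟩, ⟨p.r + 2 * p.ε, p.ε⟩, ⟨1 - (p.r + 2 * p.ε), p.r + p.ε⟩,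
      ⟨1 - p.r - p.ε, p.ε⟩] j

@[simp] lemma φ0_re (z : ℂ) : (φ p 0 z).re = p.r * z.re + p.ε := by simp [φ]
@[simp] lemma φ0_im (z : ℂ) : (φ p 0 z).im = p.r * z.im + p.ε := by simp [φ]
@[simp] lemma φ1_re (z : ℂ) : (φ p 1 z).re = -(p.r * z.im) + (p.r + 2 * p.ε) := by simp [φ]
@[simp] lemma φ1_im (z : ℂ) : (φ p 1 z).im = p.r * z.re + p.ε := by simp [φ]
@[simp] lemma φ2_re (z : ℂ) : (φ p 2 z).re = p.r * z.im + (1 - (p.r + 2 * p.ε)) := by simp [φ]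
@[simp] lemma φ2_im (z : ℂ) : (φ p 2 z).im = -(p.r * z.re) + (p.r + p.ε) := by simp [φ]
@[simp] lemma φ3_re (z : ℂ) : (φ p 3 z).re = p.r * z.re + (1 - p.r - p.ε) := by simp [φ]
@[simp] lemma φ3_im (z : ℂ) : (φ p 3 z).im = p.r * z.im + p.ε := by simp [φ]

lemma φ_sub (j : Fin 4) (z w : ℂ) :
    φ p j z - φ p j w = (p.r : ℂ) * (![1, Complex.I, -Complex.I, 1] j) * (z - w) := by
  simp only [φ]; ring

lemma φ_dist (j : Fin 4) (z w : ℂ) : dist (φ p j z) (φ p j w) = p.r * dist z w := by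
  rw [dist_eq_norm, φ_sub, norm_mul, norm_mul, dist_eq_norm]
  have : ‖(![1, Complex.I, -Complex.I, 1] : Fin 4 → ℂ) j‖ = 1 := by fin_cases j <;> simp
  rw [this]; simp [abs_of_pos p.hr]

lemma φ_surj (j : Fin 4) : Function.Surjective (φ p j) := by
  intro y
  have hr : (p.r : ℂ) ≠ 0 := by exact_mod_cast p.hr.ne'
  have hu : (![1, Complex.I, -Complex.I, 1] : Fin 4 → ℂ) j ≠ 0 := by fin_cases j <;> simp
  refine ⟨((p.r : ℂ) * (![1, Complex.I, -Complex.I, 1] j))⁻¹ * (y - φ p j 0), ?_⟩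
  have := φ_sub p j (((p.r : ℂ) * (![1, Complex.I, -Complex.I, 1] j))⁻¹ * (y - φ p j 0)) 0
  rw [sub_zero, mul_inv_cancel_left₀ (mul_ne_zero hr hu)] at this
  linear_combination this

lemma φ_inj (j : Fin 4) : Function.Injective (φ p j) := by
  intro z w h
  have := φ_dist p j z w
  rw [h, dist_self] at this
  have h2 := p.hr
  exact dist_eq_zero.1 (by nlinarith [dist_nonneg (x := z) (y := w)])

lemma φ_cont (j : Fin 4) : Continuous (φ p j) := by
  unfold φ; fun_prop

lemma φ_image_ball (j : Fin 4) (z : ℂ) (ρ : ℝ) :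
    ball (φ p j z) (p.r * ρ) ⊆ φ p j '' ball z ρ := by
  intro y hy
  obtain ⟨x, rfl⟩ := φ_surj p j y
  refine ⟨x, ?_, rfl⟩
  rw [mem_ball, φ_dist] at hy
  exact lt_of_mul_lt_mul_left hy p.hr.le

/-- The triangular cell. -/
def T : Set ℂ := {z | 0 ≤ z.im ∧ z.im ≤ z.re ∧ z.im ≤ 1 - z.re}

def C1 : Set ℂ := {z | -(2 * p.b) < z.im ∧ z.im < p.ε ∧ 0 < z.re ∧ z.re < 1 ∧ z.im < z.re ∧
  z.im < 1 - z.re}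
def C2 : Set ℂ := {z | p.r + 2 * p.ε < z.re ∧ z.re < 1 - (p.r + 2 * p.ε) ∧ -(2 * p.b) < z.im ∧
  z.im < p.r + p.ε}
def W : Set ℂ := C1 p ∪ C2 p
def Z : Set ℂ := {z | -(2 * p.b) < z.im ∧ z.im < 0 ∧ 0 < z.re ∧ z.re < 1}

/-- The part of the domain inside the cell. -/
inductive OT : ℂ → Prop
  | base (z : ℂ) (h : z ∈ W p) (h0 : 0 ≤ z.im) : OT z
  | step (j : Fin 4) (z : ℂ) (h : OT z) : OT (φ p j z)

def B : Set ℂ := {z | 0 < z.re ∧ z.re < 1 ∧ -1 < z.im ∧ z.im < 0}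

def Op : Set ℂ := {z | OT p z} ∪ Z p
def Om : Set ℂ := {z | OT p z} ∪ B

lemma Z_sub_B : Z p ⊆ B := by
  rintro z ⟨h1, h2, h3, h4⟩
  have := p.hba; have := p.hε
  exact ⟨h3, h4, by linarith, h2⟩

lemma Op_sub_Om : Op p ⊆ Om p := union_subset_union_right _ (Z_sub_B p)

lemma W_sub_Op : W p ⊆ Op p := by
  intro z hz
  by_cases h : 0 ≤ z.im
  · exact Or.inl (OT.base z hz h)
  · right
    have := p.hr; have := p.hε
    rcases hz with ⟨h1, h2, h3, h4, h5, h6⟩ | ⟨h1, h2, h3, h4⟩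
    · exact ⟨h1, by linarith, h3, h4⟩
    · exact ⟨h3, by linarith, by linarith, by linarith⟩

lemma φ_Z_W (j : Fin 4) {z : ℂ} (hz : z ∈ Z p) : φ p j z ∈ W p := by
  obtain ⟨h1, h2, h3, h4⟩ := hz
  have hr := p.hr; have hr2 := p.hr2; have hε := p.hε; have hb := p.hb; have hs := p.hsum
  have e1 : p.r * z.im < 0 := mul_neg_of_pos_of_neg hr h2
  have e2 : -p.b < p.r * z.im := by nlinarith
  have e3 : 0 < p.r * z.re := mul_pos hr h3
  have e4 : p.r * z.re < p.r := by nlinarith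
  fin_cases j
  · left; simp only [C1, mem_setOf_eq, Fin.zero_eta, φ0_re, φ0_im]
    refine ⟨?_, ?_, ?_, ?_, ?_, ?_⟩ <;> linarith
  · right; simp only [C2, mem_setOf_eq, Fin.mk_one, φ1_re, φ1_im]
    refine ⟨?_, ?_, ?_, ?_⟩ <;> linarith
  · right; simp only [C2, mem_setOf_eq, Fin.reduceFinMk, φ2_re, φ2_im]
    refine ⟨?_, ?_, ?_, ?_⟩ <;> linarith
  · left; simp only [C1, mem_setOf_eq, Fin.reduceFinMk, φ3_re, φ3_im]
    refine ⟨?_, ?_, ?_, ?_, ?_, ?_⟩ <;> linarith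

lemma φ_Op (j : Fin 4) {z : ℂ} (hz : z ∈ Op p) : φ p j z ∈ Op p := by
  rcases hz with h | h
  · exact Or.inl (OT.step j z h)
  · exact W_sub_Op p (φ_Z_W p j h)

lemma C1_open : IsOpen (C1 p) := by
  have e : C1 p = {z : ℂ | -(2 * p.b) < z.im} ∩ {z | z.im < p.ε} ∩ {z | 0 < z.re} ∩
    {z | z.re < 1} ∩ {z | z.im < z.re} ∩ {z | z.im < 1 - z.re} := by
    ext z; simp [C1, and_assoc]
  rw [e]
  have hr := Complex.continuous_re
  have hi := Complex.continuous_im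
  refine (((((?_ : IsOpen _).inter ?_).inter ?_).inter ?_).inter ?_).inter ?_ <;>
    exact isOpen_lt (by fun_prop) (by fun_prop)

lemma C2_open : IsOpen (C2 p) := by
  have e : C2 p = {z : ℂ | p.r + 2 * p.ε < z.re} ∩ {z | z.re < 1 - (p.r + 2 * p.ε)} ∩
    {z | -(2 * p.b) < z.im} ∩ {z | z.im < p.r + p.ε} := by
    ext z; simp [C2, and_assoc]
  rw [e]
  refine (((?_ : IsOpen _).inter ?_).inter ?_).inter ?_ <;>
    exact isOpen_lt (by fun_prop) (by fun_prop)

lemma B_open : IsOpen B := by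
  have e : B = {z : ℂ | 0 < z.re} ∩ {z | z.re < 1} ∩ {z | -1 < z.im} ∩ {z | z.im < 0} := by
    ext z; simp [B, and_assoc]
  rw [e]
  refine (((?_ : IsOpen _).inter ?_).inter ?_).inter ?_ <;>
    exact isOpen_lt (by fun_prop) (by fun_prop)

lemma W_open : IsOpen (W p) := (C1_open p).union (C2_open p)

lemma Om_open : IsOpen (Om p) := by
  rw [Metric.isOpen_iff]
  rintro z (h | h)
  · have : ∃ ρ > 0, ball z ρ ⊆ Op p := by
      induction h with
      | base z h h0 =>
        obtain ⟨ρ, h1, h2⟩ := Metric.isOpen_iff.1 (W_open p) z h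
        exact ⟨ρ, h1, h2.trans (W_sub_Op p)⟩
      | step j z h ih =>
        obtain ⟨ρ, h1, h2⟩ := ih
        refine ⟨p.r * ρ, mul_pos p.hr h1, (φ_image_ball p j z ρ).trans ?_⟩
        rintro _ ⟨y, hy, rfl⟩
        exact φ_Op p j (h2 hy)
    obtain ⟨ρ, h1, h2⟩ := this
    exact ⟨ρ, h1, h2.trans (Op_sub_Om p)⟩
  · obtain ⟨ρ, h1, h2⟩ := Metric.isOpen_iff.1 B_open z h
    exact ⟨ρ, h1, h2.trans (subset_union_right)⟩

/-! ### John curves -/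

def Reach (O : Set ℂ) (J : ℝ) (x y : ℂ) (τ : ℝ) : Prop :=
  0 ≤ τ ∧ ∃ γ : ℝ → ℂ, LipschitzOnWith 1 γ (Icc 0 τ) ∧ γ 0 = x ∧ γ τ = y ∧
    ∀ t ∈ Icc (0:ℝ) τ, γ t ∈ O ∧ ball (γ t) (J * t) ⊆ O

lemma Reach.mono {O O' : Set ℂ} {J : ℝ} {x y : ℂ} {τ : ℝ} (h : Reach O J x y τ) (hO : O ⊆ O') :
    Reach O' J x y τ := by
  obtain ⟨h0, γ, h1, h2, h3, h4⟩ := h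
  exact ⟨h0, γ, h1, h2, h3, fun t ht => ⟨hO (h4 t ht).1, (h4 t ht).2.trans hO⟩⟩

lemma Reach.refl {O : Set ℂ} {J : ℝ} {x : ℂ} (hx : x ∈ O) : Reach O J x x 0 := by
  refine ⟨le_rfl, fun _ => x, ?_, rfl, rfl, ?_⟩
  · exact (LipschitzWith.const x).weaken (by simp) |>.lipschitzOnWith
  · intro t ht
    have : t = 0 := le_antisymm ht.2 ht.1
    subst this
    exact ⟨hx, by simp⟩

lemma Reach.extend {O : Set ℂ} {J : ℝ} {x y q : ℂ} {τ : ℝ} (h : Reach O J x y τ)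
    (hs : ∀ s ∈ Icc (0:ℝ) 1, y + s * (q - y) ∈ O ∧
      ball (y + s * (q - y)) (J * (τ + s * dist y q)) ⊆ O) :
    Reach O J x q (τ + dist y q) := by
  by_cases hyq : y = q
  · subst hyq; simpa using h
  obtain ⟨h0, γ, h1, h2, h3, h4⟩ := h
  have hD : 0 < dist y q := dist_pos.2 hyq
  set D := dist y q with hDdef
  refine ⟨by positivity, fun t => if t ≤ τ then γ t else y + ((t - τ) / D : ℝ) * (q - y), ?_, ?_, ?_, ?_⟩
  · have key : ∀ s ∈ Icc (0:ℝ) (τ + D), ∀ t ∈ Icc (0:ℝ) (τ + D), s ≤ t →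
        dist ((fun t => if t ≤ τ then γ t else y + ((t - τ) / D : ℝ) * (q - y)) s)
          ((fun t => if t ≤ τ then γ t else y + ((t - τ) / D : ℝ) * (q - y)) t) ≤ t - s := by
      have hd : ∀ a b : ℝ, a ≤ b → dist (y + ((a / D : ℝ) : ℂ) * (q - y)) (y + ((b / D : ℝ) : ℂ) * (q - y))
          = b - a := by
        intro a b hab
        rw [dist_add_left, dist_eq_norm, ← sub_mul, norm_mul, ← Complex.ofReal_sub, ← sub_div,
          Complex.norm_real, Real.norm_eq_abs, abs_div, abs_of_pos hD, abs_sub_comm,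
          abs_of_nonneg (by linarith : 0 ≤ b - a), norm_sub_rev, ← dist_eq_norm, ← hDdef]
        field_simp
      intro s hs t ht hst
      simp only
      split_ifs with c1 c2 c2
      · have := h1.dist_le_mul s ⟨hs.1, c1⟩ t ⟨ht.1, c2⟩
        rw [Real.dist_eq, abs_sub_comm, abs_of_nonneg (by linarith : 0 ≤ t - s)] at this
        simpa using this
      · have a1 := h1.dist_le_mul s ⟨hs.1, c1⟩ τ ⟨h0, le_rfl⟩
        rw [Real.dist_eq, abs_sub_comm, abs_of_nonneg (by linarith : 0 ≤ τ - s), h3] at a1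
        have a2 := hd 0 (t - τ) (by linarith)
        simp only [zero_div, Complex.ofReal_zero, zero_mul, add_zero, sub_zero] at a2
        have a3 := dist_triangle (γ s) y (y + ((t - τ) / D : ℝ) * (q - y))
        simp at a1
        linarith
      · linarith
      · rw [hd _ _ (by linarith)]; linarith
    refine LipschitzOnWith.of_dist_le_mul fun s hs t ht => ?_
    rw [NNReal.coe_one, one_mul]
    rcases le_total s t with h | h
    · rw [Real.dist_eq, abs_sub_comm, abs_of_nonneg (by linarith)]; exact key s hs t ht h
    · rw [Real.dist_eq, abs_of_nonneg (by linarith), dist_comm]; exact key t ht s hs h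
  · simp [h0, h2]
  · simp only
    rw [if_neg (by linarith), add_sub_cancel_left, div_self hD.ne']
    simp
  · intro t ht
    simp only
    split_ifs with c
    · exact h4 t ⟨ht.1, c⟩
    · have := hs ((t - τ) / D) ⟨div_nonneg (by linarith) hD.le,
        (div_le_one hD).2 (by linarith [ht.2])⟩
      rw [div_mul_cancel₀ _ hD.ne', add_sub_cancel] at this
      exact this

lemma convex_ball {C : Set ℂ} (hC : Convex ℝ C) {x q : ℂ} {ρ0 ρ1 : ℝ} (hx : x ∈ C)
    (h0 : 0 ≤ ρ0) (h1 : 0 ≤ ρ1) (hb0 : ball x ρ0 ⊆ C) (hq : q ∈ C) (hb1 : ball q ρ1 ⊆ C)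
    {s : ℝ} (hs : s ∈ Icc (0:ℝ) 1) :
    ball (x + s * (q - x)) ((1 - s) * ρ0 + s * ρ1) ⊆ C := by
  intro y hy
  set ρ := (1 - s) * ρ0 + s * ρ1 with hρ
  rw [mem_ball, dist_eq_norm] at hy
  have hρ0 : 0 < ρ := lt_of_le_of_lt (norm_nonneg _) hy
  set h := y - (x + s * (q - x)) with hh
  have gen : ∀ c σ, c ∈ C → 0 ≤ σ → ball c σ ⊆ C → c + ((σ / ρ : ℝ) : ℂ) * h ∈ C := by
    intro c σ hc hσ hbc
    rcases hσ.eq_or_lt with e | e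
    · rw [← e]; simpa using hc
    · apply hbc
      rw [mem_ball, dist_self_add_left, norm_mul, Complex.norm_real, Real.norm_eq_abs,
        abs_of_pos (div_pos e hρ0), div_mul_eq_mul_div, div_lt_iff₀ hρ0]
      exact mul_lt_mul_of_pos_left hy e
  have := hC (gen x ρ0 hx h0 hb0) (gen q ρ1 hq h1 hb1) (sub_nonneg.2 hs.2) hs.1 (by ring)
  convert this using 1
  simp only [Complex.real_smul]
  have e : ((1 - s : ℝ) : ℂ) * ((ρ0 / ρ : ℝ) : ℂ) + (s : ℂ) * ((ρ1 / ρ : ℝ) : ℂ) = 1 := by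
    rw [← Complex.ofReal_mul, ← Complex.ofReal_mul, ← Complex.ofReal_add, ← Complex.ofReal_one]
    congr 1
    rw [← mul_div_assoc, ← mul_div_assoc, ← add_div, ← hρ, div_self hρ0.ne']
  have e2 : y = x + s * (q - x) + h := by rw [hh]; ring
  rw [e2]
  push_cast at e ⊢
  linear_combination (-h) * e

/-- Extension along a segment in a convex set. -/
lemma Reach.extend_convex {O C : Set ℂ} {J : ℝ} {x y q : ℂ} {τ ρ0 ρ1 : ℝ} (hJ : 0 ≤ J)
    (h : Reach O J x y τ)
    (hC : Convex ℝ C) (hCO : C ⊆ O) (hy : y ∈ C) (hq : q ∈ C)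
    (hb0 : ball y ρ0 ⊆ C) (hb1 : ball q ρ1 ⊆ C) (h0 : J * τ ≤ ρ0)
    (h1 : J * (τ + dist y q) ≤ ρ1) : Reach O J x q (τ + dist y q) := by
  have hτ := h.1
  refine h.extend fun s hs => ⟨?_, ?_⟩
  · apply hCO
    have := hC hy hq (sub_nonneg.2 hs.2) hs.1 (by ring)
    convert this using 1
    simp only [Complex.real_smul]; push_cast; ring
  · refine (ball_subset_ball ?_).trans ((convex_ball hC hy (le_trans (by positivity) h0)
      (le_trans (by positivity) h1) hb0 hq hb1 hs).trans hCO)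
    have a1 := mul_le_mul_of_nonneg_left h0 (sub_nonneg.2 hs.2)
    have a2 := mul_le_mul_of_nonneg_left h1 hs.1
    nlinarith

end KK

namespace KK
variable (p : Par)

lemma C1_convex : Convex ℝ (C1 p) := by
  rintro x ⟨h1, h2, h3, h4, h5, h6⟩ y ⟨k1, k2, k3, k4, k5, k6⟩ s t hs ht hst
  have hre : (s • x + t • y).re = s * x.re + t * y.re := by simp
  have him : (s • x + t • y).im = s * x.im + t * y.im := by simp
  have ht' : t = 1 - s := by linarith
  have g : ∀ a b c : ℝ, a < c → b < c → s * a + t * b < c := by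
    intro a b c ha hb
    exact convex_Iio (𝕜 := ℝ) c ha hb hs ht hst
  refine ⟨?_, ?_, ?_, ?_, ?_, ?_⟩ <;> simp only [him, hre]
  · have := g _ _ _ (neg_lt.1 h1) (neg_lt.1 k1); linarith
  · exact g _ _ _ h2 k2
  · have := g _ _ _ (neg_lt_zero.2 h3) (neg_lt_zero.2 k3); linarith
  · exact g _ _ _ h4 k4
  · have := g _ _ _ (sub_neg.2 h5) (sub_neg.2 k5); linarith
  · have := g (x.im + x.re) (y.im + y.re) 1 (by linarith) (by linarith); linarith

lemma C2_convex : Convex ℝ (C2 p) := by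
  rintro x ⟨h1, h2, h3, h4⟩ y ⟨k1, k2, k3, k4⟩ s t hs ht hst
  have hre : (s • x + t • y).re = s * x.re + t * y.re := by simp
  have him : (s • x + t • y).im = s * x.im + t * y.im := by simp
  have g : ∀ a b c : ℝ, a < c → b < c → s * a + t * b < c := by
    intro a b c ha hb
    exact convex_Iio (𝕜 := ℝ) c ha hb hs ht hst
  refine ⟨?_, ?_, ?_, ?_⟩ <;> try rw [him]
  · rw [hre]; have := g _ _ _ (neg_lt_neg h1) (neg_lt_neg k1); linarith
  · rw [hre]; exact g _ _ _ h2 k2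
  · have := g _ _ _ (neg_lt.1 h3) (neg_lt.1 k3); linarith
  · exact g _ _ _ h4 k4

lemma B_convex : Convex ℝ B := by
  rintro x ⟨h1, h2, h3, h4⟩ y ⟨k1, k2, k3, k4⟩ s t hs ht hst
  have hre : (s • x + t • y).re = s * x.re + t * y.re := by simp
  have him : (s • x + t • y).im = s * x.im + t * y.im := by simp
  have g : ∀ a b c : ℝ, a < c → b < c → s * a + t * b < c := by
    intro a b c ha hb
    exact convex_Iio (𝕜 := ℝ) c ha hb hs ht hst
  refine ⟨?_, ?_, ?_, ?_⟩ <;> try rw [him]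
  · rw [hre]; have := g _ _ _ (neg_lt_neg h1) (neg_lt_neg k1); linarith
  · rw [hre]; exact g _ _ _ h2 k2
  · have := g _ _ _ (neg_lt.1 h3) (neg_lt.1 k3); linarith
  · exact g _ _ _ h4 k4

lemma ball_coord {q y : ℂ} {ρ : ℝ} (hy : y ∈ ball q ρ) :
    q.re - ρ < y.re ∧ y.re < q.re + ρ ∧ q.im - ρ < y.im ∧ y.im < q.im + ρ := by
  rw [mem_ball, dist_eq_norm] at hy
  have h1 := abs_lt.1 ((Complex.abs_re_le_norm (y - q)).trans_lt hy)
  have h2 := abs_lt.1 ((Complex.abs_im_le_norm (y - q)).trans_lt hy)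
  simp at h1 h2
  refine ⟨?_, ?_, ?_, ?_⟩ <;> linarith [h1.1, h1.2, h2.1, h2.2]

lemma ball_sub_C1 {q : ℂ} {ρ : ℝ} (h1 : -(2 * p.b) ≤ q.im - ρ) (h2 : q.im + ρ ≤ p.ε)
    (h3 : ρ ≤ q.re) (h4 : q.re ≤ 1 - ρ) (h5 : q.im + 2 * ρ ≤ q.re) (h6 : q.im + 2 * ρ ≤ 1 - q.re) :
    ball q ρ ⊆ C1 p := by
  intro y hy
  obtain ⟨a1, a2, a3, a4⟩ := ball_coord hy
  refine ⟨?_, ?_, ?_, ?_, ?_, ?_⟩ <;> linarith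

lemma ball_sub_C2 {q : ℂ} {ρ : ℝ} (h1 : p.r + 2 * p.ε ≤ q.re - ρ)
    (h2 : q.re + ρ ≤ 1 - (p.r + 2 * p.ε))
    (h3 : -(2 * p.b) ≤ q.im - ρ) (h4 : q.im + ρ ≤ p.r + p.ε) :
    ball q ρ ⊆ C2 p := by
  intro y hy
  obtain ⟨a1, a2, a3, a4⟩ := ball_coord hy
  refine ⟨?_, ?_, ?_, ?_⟩ <;> linarith

lemma ball_sub_B {q : ℂ} {ρ : ℝ} (h1 : 0 ≤ q.re - ρ) (h2 : q.re + ρ ≤ 1)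
    (h3 : -1 ≤ q.im - ρ) (h4 : q.im + ρ ≤ 0) : ball q ρ ⊆ B := by
  intro y hy
  obtain ⟨a1, a2, a3, a4⟩ := ball_coord hy
  refine ⟨?_, ?_, ?_, ?_⟩ <;> linarith

/-- exit point of the cell -/
def ex : ℂ := ⟨1 / 2, -(p.b / 2)⟩
def ell : ℝ := p.b / (2 * p.J)

lemma J_ell : p.J * ell p = p.b / 2 := by
  have := p.hJ; unfold ell; field_simp

lemma ell_nonneg : 0 ≤ ell p := by
  have := p.hJ; have := p.hb; unfold ell; positivity

lemma dist_le_ell {z w : ℂ} {k : ℝ} (hk : 0 ≤ k)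
    (h : (z.re - w.re) ^ 2 + (z.im - w.im) ^ 2 ≤ k ^ 2 * ((1 + (p.b + 4 * p.ε) ^ 2) / 4)) :
    dist z w ≤ k * ell p := by
  have hl : (1 + (p.b + 4 * p.ε) ^ 2) / 4 ≤ ell p ^ 2 := by
    have := p.hJ; have h1 := p.hJb
    unfold ell
    rw [div_pow, le_div_iff₀ (by positivity)]
    nlinarith
  rw [Complex.dist_eq_re_im]
  apply Real.sqrt_le_iff.2 ⟨mul_nonneg hk (ell_nonneg p), ?_⟩
  rw [mul_pow]
  exact h.trans (mul_le_mul_of_nonneg_left hl (sq_nonneg _))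

lemma ex_C1 : ball (ex p) (p.b / 2) ⊆ C1 p := by
  have := p.hb; have := p.hε; have := p.hba
  apply ball_sub_C1 <;> simp only [ex] <;> linarith

lemma ex_C2 : ball (ex p) (p.b / 2) ⊆ C2 p := by
  have := p.hb; have := p.hε; have := p.hba; have := p.hsum; have := p.hr
  apply ball_sub_C2 <;> simp only [ex] <;> linarith

lemma reach_OT {z : ℂ} (hz : OT p z) : ∃ τ ≤ ell p, Reach (Op p) p.J z (ex p) τ := by
  have hb := p.hb; have hε := p.hε; have hba := p.hba; have hs := p.hsum; have hr := p.hr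
  have hJ := p.hJ; have hr4 := p.hr4; have hr2 := p.hr2
  have hexb : ex p ∈ ball (ex p) (p.b / 2) := mem_ball_self (by linarith)
  have hC1O : C1 p ⊆ Op p := subset_union_left.trans (W_sub_Op p)
  have hC2O : C2 p ⊆ Op p := subset_union_right.trans (W_sub_Op p)
  induction hz with
  | base z h h0 =>
    have hd : dist z (ex p) ≤ ell p := by
      rw [← one_mul (ell p)]
      apply dist_le_ell p zero_le_one
      simp only [ex]
      rcases h with ⟨h1, h2, h3, h4, h5, h6⟩ | ⟨h1, h2, h3, h4⟩
      · have a1 : (z.re - 1 / 2) ^ 2 ≤ (1 / 2) ^ 2 := by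
          apply sq_le_sq'  <;> linarith
        have a2 : (z.im - -(p.b / 2)) ^ 2 ≤ ((p.b + 4 * p.ε) / 2) ^ 2 := by
          apply sq_le_sq' <;> linarith
        linarith
      · have a1 : (z.re - 1 / 2) ^ 2 ≤ ((p.b + 4 * p.ε) / 2) ^ 2 := by
          apply sq_le_sq'  <;> linarith
        have a2 : (z.im - -(p.b / 2)) ^ 2 ≤ (1 / 2) ^ 2 := by
          apply sq_le_sq' <;> linarith
        linarith
    refine ⟨0 + dist z (ex p), by linarith, ?_⟩
    have hJd : p.J * (0 + dist z (ex p)) ≤ p.b / 2 := by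
      rw [← J_ell, zero_add]; exact mul_le_mul_of_nonneg_left hd hJ.le
    rcases h with h | h
    · exact (Reach.refl (hC1O h)).extend_convex hJ.le (C1_convex p) hC1O h (ex_C1 p hexb)
        (ρ0 := 0) (by simp) (ex_C1 p) (by simp) hJd
    · exact (Reach.refl (hC2O h)).extend_convex hJ.le (C2_convex p) hC2O h (ex_C2 p hexb)
        (ρ0 := 0) (by simp) (ex_C2 p) (by simp) hJd
  | step j z h ih =>
    obtain ⟨τ, hτ, h0, γ, g1, g2, g3, g4⟩ := ih
    -- scaled path
    have hR : Reach (Op p) p.J (φ p j z) (φ p j (ex p)) (p.r * τ) := by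
      refine ⟨by positivity, fun t => φ p j (γ (t / p.r)), ?_, ?_, ?_, ?_⟩
      · refine LipschitzOnWith.of_dist_le_mul fun s hs t ht => ?_
        have hm : ∀ t ∈ Icc (0:ℝ) (p.r * τ), t / p.r ∈ Icc (0:ℝ) τ := fun t ht =>
          ⟨div_nonneg ht.1 hr.le, (div_le_iff₀' hr).2 ht.2⟩
        have := g1.dist_le_mul _ (hm s hs) _ (hm t ht)
        rw [φ_dist]
        rw [NNReal.coe_one, one_mul, Real.dist_eq, ← sub_div, abs_div, abs_of_pos hr,
          le_div_iff₀' hr] at this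
        rw [NNReal.coe_one, one_mul, Real.dist_eq]
        exact this
      · simp [g2]
      · simp only [mul_div_cancel_left₀ _ hr.ne', g3]
      · intro t ht
        have ht' : t / p.r ∈ Icc (0:ℝ) τ := ⟨div_nonneg ht.1 hr.le, (div_le_iff₀' hr).2 ht.2⟩
        obtain ⟨q1, q2⟩ := g4 _ ht'
        refine ⟨φ_Op p j q1, ?_⟩
        have e : p.J * t = p.r * (p.J * (t / p.r)) := by field_simp
        rw [e]
        refine (φ_image_ball p j _ _).trans ?_
        rintro _ ⟨y, hy, rfl⟩
        exact φ_Op p j (q2 hy)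
    have hJ1 : p.J * (p.r * τ) ≤ p.r * (p.b / 2) := by
      rw [← J_ell]
      have := mul_le_mul_of_nonneg_left hτ (mul_pos hJ hr).le
      linarith
    have hrb : p.r * p.b ≤ p.b / 2 := by nlinarith
    have hrb0 : 0 < p.r * p.b := by positivity
    have hrb1 : p.r * p.b ≤ p.r * (1 / 2) := by nlinarith
    have fin : ∀ C : Set ℂ, Convex ℝ C → C ⊆ Op p → ball (ex p) (p.b / 2) ⊆ C →
        ball (φ p j (ex p)) (p.r * (p.b / 2)) ⊆ C →
        dist (φ p j (ex p)) (ex p) ≤ (1 - p.r) * ell p →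
        ∃ τ ≤ ell p, Reach (Op p) p.J (φ p j z) (ex p) τ := by
      intro C hC hCO hb1 hb2 hd
      have hle : p.r * τ + dist (φ p j (ex p)) (ex p) ≤ ell p := by
        have := mul_le_mul_of_nonneg_left hτ hr.le
        linarith
      refine ⟨_, hle, hR.extend_convex hJ.le hC hCO (hb2 (mem_ball_self (by positivity)))
        (hb1 hexb) hb2 hb1 hJ1 ?_⟩
      rw [← J_ell]; exact mul_le_mul_of_nonneg_left hle hJ.le
    have hk : 0 ≤ 1 - p.r := by linarith
    -- the two length estimates
    have est1 : ∀ x y : ℝ, |x| ≤ (1 - p.r) / 2 → |y| ≤ (1 - p.r) * (p.b + 4 * p.ε) / 2 →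
        x ^ 2 + y ^ 2 ≤ (1 - p.r) ^ 2 * ((1 + (p.b + 4 * p.ε) ^ 2) / 4) := by
      intro x y hx hy
      have a1 := sq_le_sq' (neg_le_of_abs_le hx) (le_of_abs_le hx)
      have a2 := sq_le_sq' (neg_le_of_abs_le hy) (le_of_abs_le hy)
      nlinarith
    have hre2 : p.r * p.ε ≤ p.ε / 2 := by nlinarith
    have hre0 : 0 < p.r * p.ε := by positivity
    fin_cases j
    · refine fin (C1 p) (C1_convex p) hC1O (ex_C1 p) ?_ ?_
      · apply ball_sub_C1 <;> simp [ex] <;> nlinarith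
      · apply dist_le_ell p hk
        apply est1 <;> rw [abs_le] <;> constructor <;> simp [ex] <;> linarith
    · refine fin (C2 p) (C2_convex p) hC2O (ex_C2 p) ?_ ?_
      · apply ball_sub_C2 <;> simp [ex] <;> nlinarith
      · apply dist_le_ell p hk
        rw [add_comm]
        apply est1 <;> rw [abs_le] <;> constructor <;> simp [ex] <;> linarith
    · refine fin (C2 p) (C2_convex p) hC2O (ex_C2 p) ?_ ?_
      · apply ball_sub_C2 <;> simp [ex] <;> nlinarith
      · apply dist_le_ell p hk
        rw [add_comm]
        apply est1 <;> rw [abs_le] <;> constructor <;> simp [ex] <;> linarith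
    · refine fin (C1 p) (C1_convex p) hC1O (ex_C1 p) ?_ ?_
      · apply ball_sub_C1 <;> simp [ex] <;> nlinarith
      · apply dist_le_ell p hk
        apply est1 <;> rw [abs_le] <;> constructor <;> simp [ex] <;> linarith

def ctr : ℂ := ⟨1 / 2, -(1 / 2)⟩

lemma ctr_B : ball ctr (1 / 2) ⊆ B := by
  apply ball_sub_B <;> simp [ctr] <;> norm_num

lemma ctr_mem : ctr ∈ B := ctr_B (mem_ball_self (by norm_num))

lemma reach_Om {z : ℂ} (hz : z ∈ Om p) : ∃ τ, Reach (Om p) p.J z ctr τ := by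
  have hb := p.hb; have hε := p.hε; have hba := p.hba; have hJ := p.hJ; have hJ1 := p.hJ1
  have hBO : B ⊆ Om p := subset_union_right
  rcases hz with h | h
  · obtain ⟨τ, hτ, hR⟩ := reach_OT p h
    have hR := hR.mono (Op_sub_Om p)
    have hexB : ball (ex p) (p.b / 2) ⊆ B := by
      apply ball_sub_B <;> simp [ex] <;> linarith
    have hτ2 : p.J * τ ≤ p.b / 2 := by
      rw [← J_ell]; exact mul_le_mul_of_nonneg_left hτ hJ.le
    have hd : dist (ex p) ctr ≤ 1 / 2 - p.b / 2 := by
      rw [Complex.dist_eq_re_im]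
      apply Real.sqrt_le_iff.2 ⟨by linarith, ?_⟩
      simp [ex, ctr]; nlinarith
    refine ⟨_, hR.extend_convex hJ.le B_convex hBO (hexB (mem_ball_self (by linarith))) ctr_mem
      hexB ctr_B hτ2 ?_⟩
    nlinarith [dist_nonneg (x := ex p) (y := ctr)]
  · refine ⟨_, (Reach.refl (hBO h)).extend_convex hJ.le B_convex hBO h ctr_mem
      (ρ0 := 0) (by simp) ctr_B (by simp) ?_⟩
    have hd : dist z ctr ≤ 1 := by
      rw [Complex.dist_eq_re_im]
      apply Real.sqrt_le_iff.2 ⟨by linarith, ?_⟩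
      obtain ⟨h1, h2, h3, h4⟩ := h
      have a1 : (z.re - 1 / 2) ^ 2 ≤ (1 / 2) ^ 2 := by apply sq_le_sq' <;> linarith
      have a2 : (z.im - -(1 / 2)) ^ 2 ≤ (1 / 2) ^ 2 := by apply sq_le_sq' <;> linarith
      simp only [ctr]; linarith
    nlinarith [dist_nonneg (x := z) (y := ctr)]

lemma Om_connected : IsConnected (Om p) := by
  refine ⟨⟨ctr, Or.inr ctr_mem⟩, isPreconnected_of_forall ctr fun y hy => ?_⟩
  obtain ⟨τ, h0, γ, g1, g2, g3, g4⟩ := reach_Om p hy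
  refine ⟨γ '' Icc 0 τ, ?_, ⟨τ, ⟨h0, le_rfl⟩, g3⟩, ⟨0, ⟨le_rfl, h0⟩, g2⟩,
    isPreconnected_Icc.image _ g1.continuousOn⟩
  rintro _ ⟨t, ht, rfl⟩
  exact (g4 t ht).1

end KK

namespace KK
variable (p : Par)

/-! ### The boundary curve -/
open BoundedContinuousFunction

def cl (t : ℝ) : ℝ := max 0 (min 1 t)

lemma cl_cont : Continuous cl := by unfold cl; fun_prop
lemma cl_nonneg (t : ℝ) : 0 ≤ cl t := le_max_left _ _
lemma cl_le (t : ℝ) : cl t ≤ 1 := max_le zero_le_one (min_le_left _ _)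
lemma cl_le0 {t : ℝ} (h : t ≤ 0) : cl t = 0 := by
  unfold cl; exact max_eq_left ((min_le_right _ _).trans h)
lemma cl_ge1 {t : ℝ} (h : 1 ≤ t) : cl t = 1 := by
  unfold cl; rw [min_eq_left h]; simp
lemma cl_mid {t : ℝ} (h : t ∈ Icc (0:ℝ) 1) : cl t = t := by
  unfold cl; rw [min_eq_right h.2, max_eq_right h.1]

def cb : ℝ →ᵇ ℂ := BoundedContinuousFunction.ofNormedAddCommGroup (fun t => ((cl t : ℝ) : ℂ))
  (Complex.continuous_ofReal.comp cl_cont) 1 (fun t => by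
    rw [Complex.norm_real, Real.norm_eq_abs, abs_of_nonneg (cl_nonneg t)]; exact cl_le t)

def sh (k : ℝ) : C(ℝ, ℝ) := ⟨fun t => 9 * t - k, by fun_prop⟩

def F (f : ℝ →ᵇ ℂ) : ℝ →ᵇ ℂ :=
  (⟨p.ε, p.ε⟩ : ℂ) • cb.compContinuous (sh 0) + (p.r : ℂ) • f.compContinuous (sh 1)
  + (p.ε : ℂ) • cb.compContinuous (sh 2) + (p.r * Complex.I : ℂ) • f.compContinuous (sh 3)
  + (p.b : ℂ) • cb.compContinuous (sh 4) + (-(p.r * Complex.I) : ℂ) • f.compContinuous (sh 5)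
  + (p.ε : ℂ) • cb.compContinuous (sh 6) + (p.r : ℂ) • f.compContinuous (sh 7)
  + (⟨p.ε, -p.ε⟩ : ℂ) • cb.compContinuous (sh 8)

lemma F_apply (f : ℝ →ᵇ ℂ) (t : ℝ) : F p f t =
  (⟨p.ε, p.ε⟩ : ℂ) * (cl (9 * t - 0) : ℝ) + (p.r : ℂ) * f (9 * t - 1)
  + (p.ε : ℂ) * (cl (9 * t - 2) : ℝ) + (p.r * Complex.I : ℂ) * f (9 * t - 3)
  + (p.b : ℂ) * (cl (9 * t - 4) : ℝ) + (-(p.r * Complex.I) : ℂ) * f (9 * t - 5)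
  + (p.ε : ℂ) * (cl (9 * t - 6) : ℝ) + (p.r : ℂ) * f (9 * t - 7)
  + (⟨p.ε, -p.ε⟩ : ℂ) * (cl (9 * t - 8) : ℝ) := rfl

/-- The pieces of the curve. -/
def pc (f : ℝ → ℂ) (k : Fin 9) (s : ℝ) : ℂ :=
  ![⟨p.ε * s, p.ε * s⟩, φ p 0 (f s), ⟨p.r + p.ε + p.ε * s, p.ε⟩, φ p 1 (f s),
    ⟨p.r + 2 * p.ε + p.b * s, p.r + p.ε⟩, φ p 2 (f s),
    ⟨1 - (p.r + 2 * p.ε) + p.ε * s, p.ε⟩, φ p 3 (f s), ⟨1 - p.ε + p.ε * s, p.ε - p.ε * s⟩] k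

structure Good (f : ℝ → ℂ) : Prop where
  z : ∀ t ≤ 0, f t = 0
  o : ∀ t, 1 ≤ t → f t = 1
  m : ∀ t, f t ∈ T

lemma F_pc {f : ℝ →ᵇ ℂ} (hf : Good f) (k : Fin 9) {s : ℝ} (hs : s ∈ Icc (0:ℝ) 1) :
    F p f ((s + (k : ℕ)) / 9) = pc p f k s := by
  obtain ⟨h0, h1⟩ := hs
  have hsum := p.hsum
  rw [F_apply, mul_div_cancel₀ _ (by norm_num : (9:ℝ) ≠ 0)]
  fin_cases k <;> simp only [Fin.zero_eta, Fin.mk_one, Fin.reduceFinMk, Fin.coe_ofNat_eq_mod, Nat.zero_mod, Nat.one_mod, Nat.reduceMod, Nat.cast_zero, Nat.cast_one, Nat.cast_ofNat]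
  · rw [cl_mid ⟨by linarith, by linarith⟩, hf.z _ (by linarith), cl_le0 (by linarith), hf.z _ (by linarith), cl_le0 (by linarith), hf.z _ (by linarith), cl_le0 (by linarith), hf.z _ (by linarith), cl_le0 (by linarith)]
    apply Complex.ext <;> simp [pc]
  · rw [cl_ge1 (by linarith), cl_le0 (by linarith), hf.z (s+1-3) (by linarith), cl_le0 (by linarith), hf.z (s+1-5) (by linarith), cl_le0 (by linarith), hf.z (s+1-7) (by linarith), cl_le0 (by linarith)]
    apply Complex.ext <;> simp [pc] <;> linarith
  · rw [cl_ge1 (by linarith), hf.o _ (by linarith), cl_mid ⟨by linarith, by linarith⟩, hf.z _ (by linarith), cl_le0 (by linarith), hf.z _ (by linarith), cl_le0 (by linarith), hf.z _ (by linarith), cl_le0 (by linarith)]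
    apply Complex.ext <;> simp [pc] <;> linarith
  · rw [cl_ge1 (by linarith), hf.o (s+3-1) (by linarith), cl_ge1 (by linarith), cl_le0 (by linarith), hf.z (s+3-5) (by linarith), cl_le0 (by linarith), hf.z (s+3-7) (by linarith), cl_le0 (by linarith)]
    apply Complex.ext <;> simp [pc] <;> linarith
  · rw [cl_ge1 (by linarith), hf.o _ (by linarith), cl_ge1 (by linarith), hf.o _ (by linarith), cl_mid ⟨by linarith, by linarith⟩, hf.z _ (by linarith), cl_le0 (by linarith), hf.z _ (by linarith), cl_le0 (by linarith)]
    apply Complex.ext <;> simp [pc] <;> linarith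
  · rw [cl_ge1 (by linarith), hf.o (s+5-1) (by linarith), cl_ge1 (by linarith), hf.o (s+5-3) (by linarith), cl_ge1 (by linarith), cl_le0 (by linarith), hf.z (s+5-7) (by linarith), cl_le0 (by linarith)]
    apply Complex.ext <;> simp [pc] <;> linarith
  · rw [cl_ge1 (by linarith), hf.o _ (by linarith), cl_ge1 (by linarith), hf.o _ (by linarith), cl_ge1 (by linarith), hf.o _ (by linarith), cl_mid ⟨by linarith, by linarith⟩, hf.z _ (by linarith), cl_le0 (by linarith)]
    apply Complex.ext <;> simp [pc] <;> linarith
  · rw [cl_ge1 (by linarith), hf.o (s+7-1) (by linarith), cl_ge1 (by linarith), hf.o (s+7-3) (by linarith), cl_ge1 (by linarith), hf.o (s+7-5) (by linarith), cl_ge1 (by linarith), cl_le0 (by linarith)]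
    apply Complex.ext <;> simp [pc] <;> linarith
  · rw [cl_ge1 (by linarith), hf.o _ (by linarith), cl_ge1 (by linarith), hf.o _ (by linarith), cl_ge1 (by linarith), hf.o _ (by linarith), cl_ge1 (by linarith), hf.o _ (by linarith), cl_mid ⟨by linarith, by linarith⟩]
    apply Complex.ext <;> simp [pc] <;> linarith

lemma F_zero {f : ℝ →ᵇ ℂ} (hf : Good f) {t : ℝ} (ht : t ≤ 0) : F p f t = 0 := by
  rw [F_apply, cl_le0 (by linarith), hf.z _ (by linarith), cl_le0 (by linarith), hf.z _ (by linarith), cl_le0 (by linarith), hf.z _ (by linarith), cl_le0 (by linarith), hf.z _ (by linarith), cl_le0 (by linarith)]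
  simp

lemma F_one {f : ℝ →ᵇ ℂ} (hf : Good f) {t : ℝ} (ht : 1 ≤ t) : F p f t = 1 := by
  rw [F_apply, cl_ge1 (by linarith), hf.o _ (by linarith), cl_ge1 (by linarith), hf.o _ (by linarith), cl_ge1 (by linarith), hf.o _ (by linarith), cl_ge1 (by linarith), hf.o _ (by linarith), cl_ge1 (by linarith)]
  have := p.hsum
  apply Complex.ext <;> simp
  linarith

/-- Half-open decomposition of the parameter interval. -/
lemma param_cases {t : ℝ} (h : t ∈ Ico (0:ℝ) 1) :
    ∃ k : Fin 9, ∃ s ∈ Ico (0:ℝ) 1, t = (s + (k : ℕ)) / 9 := by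
  have h0 : 0 ≤ 9 * t := by linarith [h.1]
  refine ⟨⟨⌊9 * t⌋₊, ?_⟩, 9 * t - ⌊9 * t⌋₊, ⟨?_, ?_⟩, ?_⟩
  · rw [Nat.floor_lt h0]; push_cast; linarith [h.2]
  · linarith [Nat.floor_le h0]
  · linarith [Nat.lt_floor_add_one (9 * t)]
  · simp; 

lemma T_φ (j : Fin 4) {z : ℂ} (hz : z ∈ T) : φ p j z ∈ T := by
  obtain ⟨h1, h2, h3⟩ := hz
  have hr := p.hr; have hε := p.hε; have hb := p.hb; have hs := p.hsum
  have e1 : 0 ≤ p.r * z.im := by positivity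
  have e2 : p.r * z.im ≤ p.r * z.re := mul_le_mul_of_nonneg_left h2 hr.le
  have e3 : p.r * z.im ≤ p.r * (1 - z.re) := mul_le_mul_of_nonneg_left h3 hr.le
  rw [mul_sub, mul_one] at e3
  fin_cases j <;> refine ⟨?_, ?_, ?_⟩ <;> simp <;> linarith

lemma pc_mem_T {f : ℝ → ℂ} (hf : ∀ t, f t ∈ T) (k : Fin 9) {s : ℝ} (hs : s ∈ Icc (0:ℝ) 1) :
    pc p f k s ∈ T := by
  have hr := p.hr; have hε := p.hε; have hb := p.hb; have hsm := p.hsum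
  obtain ⟨h0, h1⟩ := hs
  have a1 : 0 ≤ p.ε * s := by positivity
  have a2 : p.ε * s ≤ p.ε := by nlinarith
  have a3 : 0 ≤ p.b * s := by positivity
  have a4 : p.b * s ≤ p.b := by nlinarith
  fin_cases k
  · refine ⟨?_, ?_, ?_⟩ <;> simp [pc] <;> linarith
  · exact T_φ p 0 (hf s)
  · refine ⟨?_, ?_, ?_⟩ <;> simp [pc] <;> linarith
  · exact T_φ p 1 (hf s)
  · refine ⟨?_, ?_, ?_⟩ <;> simp [pc] <;> linarith
  · exact T_φ p 2 (hf s)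
  · refine ⟨?_, ?_, ?_⟩ <;> simp [pc] <;> linarith
  · exact T_φ p 3 (hf s)
  · refine ⟨?_, ?_, ?_⟩ <;> simp [pc] <;> linarith

lemma zero_T : (0:ℂ) ∈ T := by simp [T]
lemma one_T : (1:ℂ) ∈ T := by simp [T]

lemma F_good {f : ℝ →ᵇ ℂ} (hf : Good f) : Good (F p f) := by
  refine ⟨fun t ht => F_zero p hf ht, fun t ht => F_one p hf ht, fun t => ?_⟩
  rcases le_or_gt t 0 with h | h
  · rw [F_zero p hf h]; exact zero_T
  rcases le_or_gt 1 t with h' | h'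
  · rw [F_one p hf h']; exact one_T
  obtain ⟨k, s, hs, rfl⟩ := param_cases ⟨h.le, h'⟩
  rw [F_pc p hf k ⟨hs.1, hs.2.le⟩]
  exact pc_mem_T p hf.m k ⟨hs.1, hs.2.le⟩

lemma pc_dist {f g : ℝ → ℂ} (k : Fin 9) (s : ℝ) :
    dist (pc p f k s) (pc p g k s) ≤ p.r * dist (f s) (g s) := by
  have hr := p.hr
  have h0 : 0 ≤ p.r * dist (f s) (g s) := by positivity
  fin_cases k
  · simp [pc]; positivity
  · exact (φ_dist p 0 _ _).le
  · simp [pc]; positivity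
  · exact (φ_dist p 1 _ _).le
  · simp [pc]; positivity
  · exact (φ_dist p 2 _ _).le
  · simp [pc]; positivity
  · exact (φ_dist p 3 _ _).le
  · simp [pc]; positivity

lemma F_contr {f g : ℝ →ᵇ ℂ} (hf : Good f) (hg : Good g) : dist (F p f) (F p g) ≤ p.r * dist f g := by
  have hr := p.hr
  have h0 : 0 ≤ p.r * dist f g := by positivity
  rw [BoundedContinuousFunction.dist_le h0]
  intro t
  rcases le_or_gt t 0 with h | h
  · rw [F_zero p hf h, F_zero p hg h, dist_self]; exact h0
  rcases le_or_gt 1 t with h' | h'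
  · rw [F_one p hf h', F_one p hg h', dist_self]; exact h0
  obtain ⟨k, s, hs, rfl⟩ := param_cases ⟨h.le, h'⟩
  rw [F_pc p hf k ⟨hs.1, hs.2.le⟩, F_pc p hg k ⟨hs.1, hs.2.le⟩]
  exact (pc_dist p k s).trans (mul_le_mul_of_nonneg_left (BoundedContinuousFunction.dist_coe_le_dist s) hr.le)

lemma T_closed : IsClosed T := by
  have e : T = {z : ℂ | 0 ≤ z.im} ∩ {z | z.im ≤ z.re} ∩ {z | z.im ≤ 1 - z.re} := by
    ext z; simp [T, and_assoc]
  rw [e]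
  refine ((?_ : IsClosed _).inter ?_).inter ?_ <;>
    exact isClosed_le (by fun_prop) (by fun_prop)

lemma good_closed : IsClosed {f : ℝ →ᵇ ℂ | Good f} := by
  have e : {f : ℝ →ᵇ ℂ | Good f} = (⋂ t : ℝ, ⋂ _ : t ≤ 0, {f : ℝ →ᵇ ℂ | f t = 0}) ∩
      (⋂ t : ℝ, ⋂ _ : 1 ≤ t, {f : ℝ →ᵇ ℂ | f t = 1}) ∩ (⋂ t : ℝ, {f : ℝ →ᵇ ℂ | f t ∈ T}) := by
    ext f
    simp only [mem_inter_iff, mem_iInter]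
    exact ⟨fun h => ⟨⟨h.z, h.o⟩, h.m⟩, fun h => ⟨h.1.1, h.1.2, h.2⟩⟩
  rw [e]
  have hc : ∀ t : ℝ, Continuous fun f : ℝ →ᵇ ℂ => f t := fun t => continuous_eval_const t
  refine ((isClosed_iInter fun t => isClosed_iInter fun _ => ?_).inter
    (isClosed_iInter fun t => isClosed_iInter fun _ => ?_)).inter (isClosed_iInter fun t => ?_)
  · exact isClosed_eq (hc t) continuous_const
  · exact isClosed_eq (hc t) continuous_const
  · exact T_closed.preimage (hc t)

lemma cb_good : Good cb := by
  have e : ∀ t, cb t = ((cl t : ℝ) : ℂ) := fun t => rfl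
  refine ⟨fun t ht => ?_, fun t ht => ?_, fun t => ?_⟩
  · rw [e, cl_le0 ht]; simp
  · rw [e, cl_ge1 ht]; simp
  · rw [e]
    have := cl_nonneg t; have := cl_le t
    refine ⟨?_, ?_, ?_⟩ <;> simp <;> linarith

lemma exists_curve : ∃ f : ℝ →ᵇ ℂ, Good f ∧ F p f = f := by
  have hmaps : MapsTo (F p) {f : ℝ →ᵇ ℂ | Good f} {f : ℝ →ᵇ ℂ | Good f} := fun f hf => F_good p hf
  have hr2 := p.hr2
  have hK : ContractingWith p.r.toNNReal (hmaps.restrict (F p) _ _) := by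
    refine ⟨?_, LipschitzWith.of_dist_le_mul fun f g => ?_⟩
    · rw [← NNReal.coe_lt_coe, Real.coe_toNNReal _ p.hr.le, NNReal.coe_one]; linarith
    · rw [Real.coe_toNNReal _ p.hr.le]; exact F_contr p f.2 g.2
  obtain ⟨y, hy, h, -⟩ := hK.exists_fixedPoint' good_closed.isComplete hmaps cb_good
    (edist_ne_top _ _)
  exact ⟨y, hy, h⟩

/-- The boundary curve of the cell. -/
def gam : ℝ →ᵇ ℂ := (exists_curve p).choose

lemma gam_good : Good (gam p) := (exists_curve p).choose_spec.1
lemma gam_pc (k : Fin 9) {s : ℝ} (hs : s ∈ Icc (0:ℝ) 1) :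
    gam p ((s + (k : ℕ)) / 9) = pc p (gam p) k s := by
  rw [← F_pc p (gam_good p) k hs]
  have := (exists_curve p).choose_spec.2
  exact (DFunLike.congr_fun this _).symm

end KK

namespace KK
variable (p : Par)

/-! ### Geometry of the curve -/

def Gam : Set ℂ := gam p '' Icc 0 1

lemma Gam_T : Gam p ⊆ T := by
  rintro _ ⟨t, -, rfl⟩; exact (gam_good p).m t

lemma zero_Gam : (0:ℂ) ∈ Gam p := ⟨0, by simp, (gam_good p).z 0 le_rfl⟩
lemma one_Gam : (1:ℂ) ∈ Gam p := ⟨1, by simp, (gam_good p).o 1 le_rfl⟩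

lemma Gam_compact : IsCompact (Gam p) := isCompact_Icc.image (gam p).continuous

/-- The five connecting segments. -/
def Conn : Set ℂ := {z | (z.im = z.re ∧ 0 ≤ z.re ∧ z.re ≤ p.ε) ∨
  (z.im = p.ε ∧ p.r + p.ε ≤ z.re ∧ z.re ≤ p.r + 2 * p.ε) ∨
  (z.im = p.r + p.ε ∧ p.r + 2 * p.ε ≤ z.re ∧ z.re ≤ 1 - (p.r + 2 * p.ε)) ∨
  (z.im = p.ε ∧ 1 - (p.r + 2 * p.ε) ≤ z.re ∧ z.re ≤ 1 - (p.r + p.ε)) ∨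
  (z.im = 1 - z.re ∧ 1 - p.ε ≤ z.re ∧ z.re ≤ 1)}

lemma pc_Gam (k : Fin 9) {s : ℝ} (hs : s ∈ Icc (0:ℝ) 1) : pc p (gam p) k s ∈ Gam p := by
  rw [← gam_pc p k hs]
  have h1 : ((k : ℕ) : ℝ) ≤ 8 := by exact_mod_cast Nat.le_of_lt_succ k.2
  have h2 : (0:ℝ) ≤ ((k : ℕ) : ℝ) := by positivity
  exact ⟨_, ⟨by linarith [hs.1], by linarith [hs.2]⟩, rfl⟩

lemma Gam_cases {z : ℂ} (hz : z ∈ Gam p) : (∃ j, ∃ w ∈ Gam p, z = φ p j w) ∨ z ∈ Conn p := by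
  obtain ⟨t, ht, rfl⟩ := hz
  have hr := p.hr; have hε := p.hε; have hb := p.hb; have hsm := p.hsum
  rcases ht.2.eq_or_lt with h | h
  · right; rw [h, (gam_good p).o 1 le_rfl]
    right; right; right; right
    simp; exact hε.le
  obtain ⟨k, s, hs, rfl⟩ := param_cases ⟨ht.1, h⟩
  have hs' : s ∈ Icc (0:ℝ) 1 := ⟨hs.1, hs.2.le⟩
  rw [gam_pc p k hs']
  have a1 : 0 ≤ p.ε * s := mul_nonneg hε.le hs.1
  have a2 : p.ε * s ≤ p.ε := by nlinarith [hs.2]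
  have a3 : 0 ≤ p.b * s := mul_nonneg hb.le hs.1
  have a4 : p.b * s ≤ p.b := by nlinarith [hs.2]
  have hg : gam p s ∈ Gam p := ⟨s, hs', rfl⟩
  fin_cases k
  · right; left; refine ⟨?_, ?_, ?_⟩ <;> simp [pc] <;> linarith
  · exact Or.inl ⟨0, _, hg, rfl⟩
  · right; right; left; refine ⟨?_, ?_, ?_⟩ <;> simp [pc] <;> linarith
  · exact Or.inl ⟨1, _, hg, rfl⟩
  · right; right; right; left; refine ⟨?_, ?_, ?_⟩ <;> simp [pc] <;> linarith
  · exact Or.inl ⟨2, _, hg, rfl⟩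
  · right; right; right; right; left; refine ⟨?_, ?_, ?_⟩ <;> simp [pc] <;> linarith
  · exact Or.inl ⟨3, _, hg, rfl⟩
  · right; right; right; right; right; refine ⟨?_, ?_, ?_⟩ <;> simp [pc] <;> linarith

lemma φ_Gam (j : Fin 4) {w : ℂ} (hw : w ∈ Gam p) : φ p j w ∈ Gam p := by
  obtain ⟨s, hs, rfl⟩ := hw
  fin_cases j
  · exact pc_Gam p 1 hs
  · exact pc_Gam p 3 hs
  · exact pc_Gam p 5 hs
  · exact pc_Gam p 7 hs

lemma Conn_Gam : Conn p ⊆ Gam p := by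
  have hr := p.hr; have hε := p.hε; have hb := p.hb; have hsm := p.hsum
  have gen : ∀ (k : Fin 9) (s : ℝ) (z : ℂ), 0 ≤ s → s ≤ 1 → (pc p (gam p) k s).re = z.re →
      (pc p (gam p) k s).im = z.im → z ∈ Gam p := by
    intro k s z h0 h1 h2 h3
    have : z = pc p (gam p) k s := (Complex.ext h2 h3).symm
    rw [this]; exact pc_Gam p k ⟨h0, h1⟩
  have dv : ∀ x y : ℝ, 0 < y → y * (x / y) = x := fun x y h => mul_div_cancel₀ _ h.ne'
  rintro z (⟨h1, h2, h3⟩ | ⟨h1, h2, h3⟩ | ⟨h1, h2, h3⟩ | ⟨h1, h2, h3⟩ | ⟨h1, h2, h3⟩)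
  · refine gen 0 (z.re / p.ε) z (by positivity) ((div_le_one hε).2 (by linarith)) ?_ ?_ <;>
      simp [pc, dv _ _ hε, h1]
  · refine gen 2 ((z.re - (p.r + p.ε)) / p.ε) z (div_nonneg (by linarith) hε.le)
      ((div_le_one hε).2 (by linarith)) ?_ ?_ <;> simp [pc, dv _ _ hε, h1]
  · refine gen 4 ((z.re - (p.r + 2 * p.ε)) / p.b) z (div_nonneg (by linarith) hb.le)
      ((div_le_one hb).2 (by linarith)) ?_ ?_ <;> simp [pc, dv _ _ hb, h1]
  · refine gen 6 ((z.re - (1 - (p.r + 2 * p.ε))) / p.ε) z (div_nonneg (by linarith) hε.le)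
      ((div_le_one hε).2 (by linarith)) ?_ ?_ <;> simp [pc, dv _ _ hε, h1]
  · refine gen 8 ((z.re - (1 - p.ε)) / p.ε) z (div_nonneg (by linarith) hε.le)
      ((div_le_one hε).2 (by linarith)) ?_ ?_
    · simp [pc, dv _ _ hε]
    · simp [pc, dv _ _ hε, h1]; ring

lemma T_scaled {z : ℂ} (hz : z ∈ T) : 0 ≤ p.r * z.im ∧ p.r * z.im ≤ p.r * z.re ∧
    p.r * z.im ≤ p.r - p.r * z.re := by
  obtain ⟨h1, h2, h3⟩ := hz
  have hr := p.hr
  refine ⟨by positivity, mul_le_mul_of_nonneg_left h2 hr.le, ?_⟩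
  nlinarith

lemma cell_disj {j k : Fin 4} {z w : ℂ} (hz : z ∈ T) (hw : w ∈ T) (h : φ p j z = φ p k w) :
    j = k := by
  have hr := p.hr; have hε := p.hε; have hb := p.hb; have hsm := p.hsum
  obtain ⟨a1, a2, a3⟩ := T_scaled p hz
  obtain ⟨b1, b2, b3⟩ := T_scaled p hw
  have h1 := congrArg Complex.re h
  have h2 := congrArg Complex.im h
  by_contra hne
  fin_cases j <;> fin_cases k <;> simp only [Fin.zero_eta, Fin.mk_one, Fin.reduceFinMk, φ0_re, φ0_im, φ1_re, φ1_im, φ2_re, φ2_im, φ3_re, φ3_im] at h1 h2 hne <;> first | (exact hne trivial) | linarith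

lemma conn_cell {j : Fin 4} {z : ℂ} (hz : z ∈ T) (h : φ p j z ∈ Conn p) : z = 0 ∨ z = 1 := by
  have hr := p.hr; have hε := p.hε; have hb := p.hb; have hsm := p.hsum
  obtain ⟨a1, a2, a3⟩ := T_scaled p hz
  have e0 : p.r * z.re = 0 → p.r * z.im = 0 → z = 0 := by
    intro x y
    apply Complex.ext
    · simpa [hr.ne'] using x
    · simpa [hr.ne'] using y
  have e1 : p.r * z.re = p.r → p.r * z.im = 0 → z = 1 := by
    intro x y
    apply Complex.ext
    · simpa [hr.ne'] using x
    · simpa [hr.ne'] using y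
  have e2 : (p.r * z.re = 0 ∧ p.r * z.im = 0) ∨ (p.r * z.re = p.r ∧ p.r * z.im = 0) →
      z = 0 ∨ z = 1 := by
    rintro (⟨x, y⟩ | ⟨x, y⟩)
    · exact Or.inl (e0 x y)
    · exact Or.inr (e1 x y)
  apply e2
  clear e0 e1 e2
  simp only [Conn, mem_setOf_eq] at h
  fin_cases j <;> simp only [Fin.zero_eta, Fin.mk_one, Fin.reduceFinMk, φ0_re, φ0_im, φ1_re, φ1_im, φ2_re, φ2_im, φ3_re, φ3_im] at h <;>
  rcases h with h | h | h | h | h <;> obtain ⟨h1, h2, h3⟩ := h <;>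
  first
    | (exfalso; linarith)
    | (left; constructor <;> linarith)
    | (right; constructor <;> linarith)

lemma OT_T {z : ℂ} (h : OT p z) : z ∈ T := by
  have hr := p.hr; have hε := p.hε; have hb := p.hb; have hsm := p.hsum
  induction h with
  | base z h h0 =>
    rcases h with ⟨h1, h2, h3, h4, h5, h6⟩ | ⟨h1, h2, h3, h4⟩
    · exact ⟨h0, h5.le, h6.le⟩
    · exact ⟨h0, by linarith, by linarith⟩
  | step j z h ih => exact T_φ p j ih

lemma OT_Gam {z : ℂ} (h : OT p z) : z ∉ Gam p := by
  have hr := p.hr; have hε := p.hε; have hb := p.hb; have hsm := p.hsum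
  induction h with
  | base z h h0 =>
    intro hG
    rcases Gam_cases p hG with ⟨j, w, hw, rfl⟩ | hc
    · obtain ⟨a1, a2, a3⟩ := T_scaled p (Gam_T p hw)
      rcases h with ⟨h1, h2, h3, h4, h5, h6⟩ | ⟨h1, h2, h3, h4⟩ <;> fin_cases j <;>
        simp at * <;> linarith
    · rcases h with ⟨h1, h2, h3, h4, h5, h6⟩ | ⟨h1, h2, h3, h4⟩ <;>
      rcases hc with ⟨c1, c2, c3⟩ | ⟨c1, c2, c3⟩ | ⟨c1, c2, c3⟩ | ⟨c1, c2, c3⟩ | ⟨c1, c2, c3⟩ <;>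
      linarith
  | step j z h ih =>
    intro hG
    have hT := OT_T p h
    rcases Gam_cases p hG with ⟨k, w, hw, e⟩ | hc
    · have := cell_disj p hT (Gam_T p hw) e
      subst this
      exact ih (φ_inj p _ e ▸ hw)
    · rcases conn_cell p hT hc with rfl | rfl
      · exact ih (zero_Gam p)
      · exact ih (one_Gam p)

lemma T_dist {z w : ℂ} (hz : z ∈ T) (hw : w ∈ T) : dist z w ≤ 2 := by
  obtain ⟨h1, h2, h3⟩ := hz
  obtain ⟨k1, k2, k3⟩ := hw
  rw [dist_eq_norm]
  refine (Complex.norm_le_abs_re_add_abs_im _).trans ?_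
  have : |(z - w).re| ≤ 1 := by rw [Complex.sub_re, abs_le]; constructor <;> linarith
  have : |(z - w).im| ≤ 1 := by rw [Complex.sub_im, abs_le]; constructor <;> linarith
  linarith

/-- Contraction principle for the distance function. -/
lemma sup_lemma {A S : Set ℂ} (hA : A ⊆ T) (hS : S ⊆ T) (hne : S.Nonempty)
    (h : ∀ a ∈ A, a ∈ closure S ∨ ∃ a' ∈ A, infDist a S ≤ p.r * infDist a' S) :
    A ⊆ closure S := by
  have hr := p.hr; have hr2 := p.hr2
  obtain ⟨s0, hs0⟩ := hne
  have key : ∀ n : ℕ, ∀ a ∈ A, infDist a S ≤ (1 / 2 : ℝ) ^ n * 2 := by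
    intro n
    induction n with
    | zero =>
      intro a ha
      rw [pow_zero, one_mul]
      exact (infDist_le_dist_of_mem hs0).trans (T_dist (hA ha) (hS hs0))
    | succ n ih =>
      intro a ha
      rcases h a ha with h | ⟨a', ha', h⟩
      · rw [(mem_closure_iff_infDist_zero ⟨s0, hs0⟩).1 h]; positivity
      · have := ih a' ha'
        have h0 : 0 ≤ infDist a' S := infDist_nonneg
        rw [pow_succ]
        nlinarith
  intro a ha
  rw [mem_closure_iff_infDist_zero ⟨s0, hs0⟩]
  refine le_antisymm ?_ infDist_nonneg
  have ht : Filter.Tendsto (fun n : ℕ => (1 / 2 : ℝ) ^ n * 2) Filter.atTop (nhds (0 * 2)) :=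
    (tendsto_pow_atTop_nhds_zero_of_lt_one (by norm_num) (by norm_num)).mul_const 2
  rw [zero_mul] at ht
  exact ge_of_tendsto' ht fun n => key n a ha

lemma infDist_φ (j : Fin 4) {S : Set ℂ} (hne : S.Nonempty) (hS : ∀ s ∈ S, φ p j s ∈ S) (a : ℂ) :
    infDist (φ p j a) S ≤ p.r * infDist a S := by
  have hr := p.hr
  refine le_of_forall_pos_le_add fun δ hδ => ?_
  obtain ⟨s, hs, h⟩ := (infDist_lt_iff hne).1 (lt_add_of_pos_right (infDist a S) (div_pos hδ hr))
  refine (infDist_le_dist_of_mem (hS s hs)).trans ?_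
  rw [φ_dist]
  have := mul_le_mul_of_nonneg_left h.le hr.le
  rw [mul_add, mul_div_cancel₀ _ hr.ne'] at this
  exact this

lemma mem_closure_seg {S : Set ℂ} {z w : ℂ} (h : ∀ s : ℝ, 0 < s → s ≤ 1 → z + s * (w - z) ∈ S) :
    z ∈ closure S := by
  have hc : Continuous fun s : ℝ => z + s * (w - z) := by fun_prop
  have h0 : (0:ℝ) ∈ closure (Ioc (0:ℝ) 1) := by
    rw [closure_Ioc (by norm_num)]; simp
  have := hc.continuousWithinAt.mem_closure_image h0 (f := fun s : ℝ => z + s * (w - z))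
  simp only [Complex.ofReal_zero, zero_mul, add_zero] at this
  refine closure_mono ?_ this
  rintro _ ⟨s, hs, rfl⟩
  exact h s hs.1 hs.2

lemma half_OT : OT p ((1/2 : ℝ) : ℂ) := by
  have hε := p.hε; have hb := p.hb
  refine OT.base _ (Or.inl ?_) (by simp)
  refine ⟨?_, ?_, ?_, ?_, ?_, ?_⟩ <;> simp <;> norm_num <;> linarith

lemma Conn_closure : Conn p ⊆ closure {z | OT p z} := by
  have hr := p.hr; have hε := p.hε; have hb := p.hb; have hsm := p.hsum
  intro z hz
  apply mem_closure_seg (w := ((1/2 : ℝ) : ℂ))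
  intro s h0 h1
  have e1 : (z + s * (((1/2 : ℝ) : ℂ) - z)).re = z.re + s * (1 / 2 - z.re) := by simp
  have e2 : (z + s * (((1/2 : ℝ) : ℂ) - z)).im = z.im - s * z.im := by simp; ring
  have q1 : 0 < s * p.ε := by positivity
  have q1' : 0 < s * p.r := by positivity
  have q1'' : 0 < s * p.b := by positivity
  rcases hz with ⟨c1, c2, c3⟩ | ⟨c1, c2, c3⟩ | ⟨c1, c2, c3⟩ | ⟨c1, c2, c3⟩ | ⟨c1, c2, c3⟩
  · refine OT.base _ (Or.inl ⟨?_, ?_, ?_, ?_, ?_, ?_⟩) ?_ <;> (try rw [e2]) <;> (try rw [e1]) <;> nlinarith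
  · refine OT.base _ (Or.inl ⟨?_, ?_, ?_, ?_, ?_, ?_⟩) ?_ <;> (try rw [e2]) <;> (try rw [e1]) <;> nlinarith
  · refine OT.base _ (Or.inr ⟨?_, ?_, ?_, ?_⟩) ?_ <;> (try rw [e2]) <;> (try rw [e1]) <;> nlinarith
  · refine OT.base _ (Or.inl ⟨?_, ?_, ?_, ?_, ?_, ?_⟩) ?_ <;> (try rw [e2]) <;> (try rw [e1]) <;> nlinarith
  · refine OT.base _ (Or.inl ⟨?_, ?_, ?_, ?_, ?_, ?_⟩) ?_ <;> (try rw [e2]) <;> (try rw [e1]) <;> nlinarith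

lemma Gam_closure : Gam p ⊆ closure {z | OT p z} := by
  refine sup_lemma p (Gam_T p) (fun z h => OT_T p h) ⟨_, half_OT p⟩ ?_
  intro a ha
  rcases Gam_cases p ha with ⟨j, w, hw, rfl⟩ | hc
  · exact Or.inr ⟨w, hw, infDist_φ p j ⟨_, half_OT p⟩ (fun s hs => OT.step j s hs) w⟩
  · exact Or.inl (Conn_closure p hc)

/-- Closed hull of the base piece. -/
def K : Set ℂ := {z | 0 ≤ z.im ∧ z.im ≤ p.ε ∧ z.im ≤ z.re ∧ z.im ≤ 1 - z.re} ∪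
  {z | p.r + 2 * p.ε ≤ z.re ∧ z.re ≤ 1 - (p.r + 2 * p.ε) ∧ 0 ≤ z.im ∧ z.im ≤ p.r + p.ε}

lemma K_closed : IsClosed (K p) := by
  apply IsClosed.union
  · have e : {z : ℂ | 0 ≤ z.im ∧ z.im ≤ p.ε ∧ z.im ≤ z.re ∧ z.im ≤ 1 - z.re} =
      {z : ℂ | 0 ≤ z.im} ∩ {z | z.im ≤ p.ε} ∩ {z | z.im ≤ z.re} ∩ {z | z.im ≤ 1 - z.re} := by
      ext z; simp [and_assoc]
    rw [e]
    refine (((?_ : IsClosed _).inter ?_).inter ?_).inter ?_ <;>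
      exact isClosed_le (by fun_prop) (by fun_prop)
  · have e : {z : ℂ | p.r + 2 * p.ε ≤ z.re ∧ z.re ≤ 1 - (p.r + 2 * p.ε) ∧ 0 ≤ z.im ∧ z.im ≤ p.r + p.ε} =
      {z : ℂ | p.r + 2 * p.ε ≤ z.re} ∩ {z | z.re ≤ 1 - (p.r + 2 * p.ε)} ∩ {z | 0 ≤ z.im} ∩
        {z | z.im ≤ p.r + p.ε} := by
      ext z; simp [and_assoc]
    rw [e]
    refine (((?_ : IsClosed _).inter ?_).inter ?_).inter ?_ <;>
      exact isClosed_le (by fun_prop) (by fun_prop)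

lemma door {x : ℝ} (h0 : 0 ≤ x) (h1 : x ≤ 1) : OT p (x : ℂ) ∨ (x : ℂ) ∈ Gam p := by
  have hε := p.hε; have hb := p.hb
  rcases h0.eq_or_lt with h | h
  · right; rw [← h]; simpa using zero_Gam p
  rcases h1.eq_or_lt with h' | h'
  · right; rw [h']; simpa using one_Gam p
  left
  refine OT.base _ (Or.inl ?_) (by simp)
  refine ⟨?_, ?_, ?_, ?_, ?_, ?_⟩ <;> simp <;> linarith

lemma φ_door (j : Fin 4) {x : ℝ} (h0 : 0 ≤ x) (h1 : x ≤ 1) :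
    OT p (φ p j x) ∨ φ p j x ∈ Gam p :=
  (door p h0 h1).imp (OT.step j _) (φ_Gam p j)

lemma K_cases {z : ℂ} (hz : z ∈ K p) : OT p z ∨ z ∈ Gam p := by
  have hr := p.hr; have hε := p.hε; have hb := p.hb; have hsm := p.hsum
  have dv : ∀ x : ℝ, p.r * (x / p.r) = x := fun x => mul_div_cancel₀ _ hr.ne'
  have gen : ∀ (j : Fin 4) (x : ℝ), 0 ≤ x → x ≤ p.r → (φ p j ((x / p.r : ℝ) : ℂ)).re = z.re →
      (φ p j ((x / p.r : ℝ) : ℂ)).im = z.im → OT p z ∨ z ∈ Gam p := by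
    intro j x a1 a2 a3 a4
    have e : z = φ p j ((x / p.r : ℝ) : ℂ) := (Complex.ext a3 a4).symm
    rw [e]
    exact φ_door p j (div_nonneg a1 hr.le) ((div_le_one hr).2 a2)
  have h2 : 0 ≤ z.im → p.r + 2 * p.ε < z.re → z.re < 1 - (p.r + 2 * p.ε) →
    z.im < p.r + p.ε → OT p z := fun a1 a2 a3 a4 =>
      OT.base z (Or.inr ⟨a2, a3, by linarith, a4⟩) a1
  have h1 : 0 ≤ z.im → z.im < p.ε → z.im < z.re → z.im < 1 - z.re → OT p z := fun a1 a2 a3 a4 =>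
      OT.base z (Or.inl ⟨by linarith, a2, by linarith, by linarith, a3, a4⟩) a1
  rcases hz with ⟨c1, c2, c3, c4⟩ | ⟨c1, c2, c3, c4⟩
  · rcases c3.eq_or_lt with c3' | c3'
    · exact Or.inr (Conn_Gam p (Or.inl ⟨c3', by linarith, by linarith⟩))
    rcases c4.eq_or_lt with c4' | c4'
    · exact Or.inr (Conn_Gam p (Or.inr (Or.inr (Or.inr (Or.inr ⟨c4', by linarith, by linarith⟩)))))
    rcases c2.eq_or_lt with c2' | c2'
    swap
    · exact Or.inl (h1 c1 c2' c3' c4')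
    rcases le_or_gt z.re (p.r + p.ε) with x1 | x1
    · exact gen 0 (z.re - p.ε) (by linarith) (by linarith) (by simp [dv]) (by simp [c2'])
    rcases le_or_gt z.re (p.r + 2 * p.ε) with x2 | x2
    · exact Or.inr (Conn_Gam p (Or.inr (Or.inl ⟨c2', by linarith, by linarith⟩)))
    rcases lt_or_ge z.re (1 - (p.r + 2 * p.ε)) with x3 | x3
    · exact Or.inl (h2 c1 x2 x3 (by linarith))
    rcases le_or_gt z.re (1 - (p.r + p.ε)) with x4 | x4
    · exact Or.inr (Conn_Gam p (Or.inr (Or.inr (Or.inr (Or.inl ⟨c2', by linarith, by linarith⟩)))))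
    · exact gen 3 (z.re - (1 - p.r - p.ε)) (by linarith) (by linarith) (by simp [dv]) (by simp [c2'])
  · rcases c4.eq_or_lt with c4' | c4'
    · exact Or.inr (Conn_Gam p (Or.inr (Or.inr (Or.inl ⟨c4', by linarith, by linarith⟩))))
    rcases lt_or_ge z.im p.ε with y | y
    · exact Or.inl (h1 c3 y (by linarith) (by linarith))
    rcases c1.eq_or_lt with c1' | c1'
    · exact gen 1 (z.im - p.ε) (by linarith) (by linarith) (by simp [c1']) (by simp [dv])
    rcases c2.eq_or_lt with c2' | c2'
    · exact gen 2 (p.r + p.ε - z.im) (by linarith) (by linarith) (by simp [c2'])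
        (by simp [dv])
    · exact Or.inl (h2 c3 c1' c2' c4')

lemma OT_sub : {z | OT p z} ⊆ K p ∪ ⋃ j, φ p j '' {z | OT p z} := by
  have hr := p.hr; have hε := p.hε; have hb := p.hb; have hsm := p.hsum
  intro z hz
  cases hz with
  | base _ h h0 =>
    left
    rcases h with ⟨h1, h2, h3, h4, h5, h6⟩ | ⟨h1, h2, h3, h4⟩
    · exact Or.inl ⟨h0, h2.le, h5.le, h6.le⟩
    · exact Or.inr ⟨h1.le, h2.le, h0, h4.le⟩
  | step j w h => exact Or.inr (mem_iUnion.2 ⟨j, w, h, rfl⟩)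

lemma closure_OT_sub : closure {z | OT p z} ⊆ T := closure_minimal (fun _ h => OT_T p h) T_closed

lemma closure_OT_cases {z : ℂ} (hz : z ∈ closure {z | OT p z}) :
    z ∈ K p ∨ ∃ j, ∃ w ∈ closure {z | OT p z}, z = φ p j w := by
  have hcpt : IsCompact (closure {z | OT p z}) := by
    refine Metric.isCompact_of_isClosed_isBounded isClosed_closure ?_
    rw [Metric.isBounded_iff]
    exact ⟨2, fun x hx y hy => T_dist (closure_OT_sub p hx) (closure_OT_sub p hy)⟩
  have hcl : IsClosed (K p ∪ ⋃ j, φ p j '' closure {z | OT p z}) :=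
    (K_closed p).union (isClosed_iUnion_of_finite fun j => (hcpt.image (φ_cont p j)).isClosed)
  have hsub : {z | OT p z} ⊆ K p ∪ ⋃ j, φ p j '' closure {z | OT p z} :=
    (OT_sub p).trans (union_subset_union_right _ (iUnion_mono fun j => image_mono subset_closure))
  rcases closure_minimal hsub hcl hz with h | h
  · exact Or.inl h
  · obtain ⟨j, w, hw, rfl⟩ := mem_iUnion.1 h
    exact Or.inr ⟨j, w, hw, rfl⟩

lemma closure_OT {z : ℂ} (hz : z ∈ closure {z | OT p z}) : OT p z ∨ z ∈ Gam p := by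
  by_contra hcon
  push Not at hcon
  have : closure {z | OT p z} \ {z | OT p z} ⊆ closure (Gam p) := by
    refine sup_lemma p (fun z h => closure_OT_sub p h.1) (Gam_T p) ⟨_, zero_Gam p⟩ ?_
    rintro a ⟨ha, ha'⟩
    rcases closure_OT_cases p ha with h | ⟨j, w, hw, rfl⟩
    · rcases K_cases p h with h | h
      · exact absurd h ha'
      · exact Or.inl (subset_closure h)
    · refine Or.inr ⟨w, ⟨hw, fun h => ha' (OT.step j w h)⟩, ?_⟩
      exact infDist_φ p j ⟨_, zero_Gam p⟩ (fun s hs => φ_Gam p j hs) w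
  rw [(Gam_compact p).isClosed.closure_eq] at this
  exact hcon.2 (this ⟨hz, hcon.1⟩)

/-- The three outer sides. -/
def S3 : Set ℂ := {z | (z.re = 1 ∧ -1 ≤ z.im ∧ z.im ≤ 0) ∨ (z.im = -1 ∧ 0 ≤ z.re ∧ z.re ≤ 1) ∨
  (z.re = 0 ∧ -1 ≤ z.im ∧ z.im ≤ 0)}

lemma S3_T {z : ℂ} (h : z ∈ S3) (hT : z ∈ T) : z = 0 ∨ z = 1 := by
  obtain ⟨h1, h2, h3⟩ := hT
  rcases h with ⟨a1, a2, a3⟩ | ⟨a1, a2, a3⟩ | ⟨a1, a2, a3⟩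
  · right; apply Complex.ext <;> simp <;> linarith
  · linarith
  · left; apply Complex.ext <;> simp <;> linarith

lemma S3_closure : S3 ⊆ closure B := by
  intro z hz
  apply mem_closure_seg (w := ctr)
  intro s h0 h1
  have e1 : (z + s * (ctr - z)).re = z.re + s * (1 / 2 - z.re) := by simp [ctr]
  have e2 : (z + s * (ctr - z)).im = z.im + s * (-(1 / 2) - z.im) := by simp [ctr]
  unfold B
  rcases hz with ⟨a1, a2, a3⟩ | ⟨a1, a2, a3⟩ | ⟨a1, a2, a3⟩ <;>
    refine ⟨?_, ?_, ?_, ?_⟩ <;> (try rw [e1]) <;> (try rw [e2]) <;> nlinarith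

lemma closure_B {z : ℂ} (h : z ∈ closure B) : 0 ≤ z.re ∧ z.re ≤ 1 ∧ -1 ≤ z.im ∧ z.im ≤ 0 := by
  have hc : IsClosed {z : ℂ | 0 ≤ z.re ∧ z.re ≤ 1 ∧ -1 ≤ z.im ∧ z.im ≤ 0} := by
    have e : {z : ℂ | 0 ≤ z.re ∧ z.re ≤ 1 ∧ -1 ≤ z.im ∧ z.im ≤ 0} =
      {z : ℂ | 0 ≤ z.re} ∩ {z | z.re ≤ 1} ∩ {z | -1 ≤ z.im} ∩ {z | z.im ≤ 0} := by
      ext z; simp [and_assoc]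
    rw [e]
    refine (((?_ : IsClosed _).inter ?_).inter ?_).inter ?_ <;>
      exact isClosed_le (by fun_prop) (by fun_prop)
  have hs : B ⊆ {z : ℂ | 0 ≤ z.re ∧ z.re ≤ 1 ∧ -1 ≤ z.im ∧ z.im ≤ 0} :=
    fun z hz => ⟨hz.1.le, hz.2.1.le, hz.2.2.1.le, hz.2.2.2.le⟩
  exact closure_minimal hs hc h

lemma frontier_Om : frontier (Om p) = Gam p ∪ S3 := by
  rw [(Om_open p).frontier_eq]
  apply Subset.antisymm
  · rintro z ⟨h, hn⟩
    have hO : ¬ OT p z := fun h => hn (Or.inl h)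
    rw [Om, closure_union] at h
    rcases h with h | h
    · rcases closure_OT p h with h | h
      · exact absurd h hO
      · exact Or.inl h
    · obtain ⟨h1, h2, h3, h4⟩ := closure_B h
      rcases h4.eq_or_lt with h4' | h4'
      · have e : z = ((z.re : ℝ) : ℂ) := Complex.ext (by simp) (by simp [h4'])
        rw [e] at hO ⊢
        exact Or.inl ((door p h1 h2).resolve_left hO)
      · right
        rcases h1.eq_or_lt with h1' | h1'
        · exact Or.inr (Or.inr ⟨h1'.symm, h3, h4⟩)
        rcases h2.eq_or_lt with h2' | h2'
        · exact Or.inl ⟨h2', h3, h4⟩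
        rcases h3.eq_or_lt with h3' | h3'
        · exact Or.inr (Or.inl ⟨h3'.symm, h1, h2⟩)
        · exact absurd (show z ∈ Om p from Or.inr ⟨h1', h2', h3', h4'⟩) hn
  · rintro z (h | h)
    · refine ⟨closure_mono subset_union_left (Gam_closure p h), ?_⟩
      rintro (h' | h')
      · exact OT_Gam p h' h
      · have := (Gam_T p h).1; have := h'.2.2.2; linarith
    · refine ⟨closure_mono subset_union_right (S3_closure h), ?_⟩
      rintro (h' | ⟨b1, b2, b3, b4⟩)
      · rcases S3_T h (OT_T p h') with rfl | rfl
        · exact OT_Gam p h' (zero_Gam p)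
        · exact OT_Gam p h' (one_Gam p)
      · rcases h with ⟨a1, a2, a3⟩ | ⟨a1, a2, a3⟩ | ⟨a1, a2, a3⟩ <;> linarith

lemma Om_bounded : Bornology.IsBounded (Om p) := by
  rw [isBounded_iff_forall_norm_le]
  refine ⟨2, fun z hz => (Complex.norm_le_abs_re_add_abs_im _).trans ?_⟩
  have : |z.re| ≤ 1 ∧ |z.im| ≤ 1 := by
    rcases hz with h | ⟨b1, b2, b3, b4⟩
    · obtain ⟨h1, h2, h3⟩ := OT_T p h
      refine ⟨abs_le.2 ⟨?_, ?_⟩, abs_le.2 ⟨?_, ?_⟩⟩ <;> linarith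
    · refine ⟨abs_le.2 ⟨?_, ?_⟩, abs_le.2 ⟨?_, ?_⟩⟩ <;> linarith
  linarith [this.1, this.2]

end KK

namespace KK
variable (p : Par)

/-! ### Injectivity of the curve -/

lemma gam_zero {s : ℝ} (hs : s ∈ Icc (0:ℝ) 1) (h : gam p s = 0) : s = 0 := by
  have hr := p.hr; have hε := p.hε; have hb := p.hb; have hsm := p.hsum
  rcases hs.2.eq_or_lt with h1 | h1
  · rw [h1, (gam_good p).o 1 le_rfl] at h; simp at h
  obtain ⟨k, t, ht, rfl⟩ := param_cases ⟨hs.1, h1⟩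
  rw [gam_pc p k ⟨ht.1, ht.2.le⟩] at h
  obtain ⟨a1, a2, a3⟩ := T_scaled p ((gam_good p).m t)
  have q1 := mul_nonneg hε.le ht.1
  have q2 := mul_nonneg hb.le ht.1
  have h2 := congrArg Complex.re h
  fin_cases k <;> simp [pc, hε.ne'] at h2 ⊢ <;> linarith

lemma gam_one {s : ℝ} (hs : s ∈ Icc (0:ℝ) 1) (h : gam p s = 1) : s = 1 := by
  have hr := p.hr; have hε := p.hε; have hb := p.hb; have hsm := p.hsum
  rcases hs.2.eq_or_lt with h1 | h1
  · exact h1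
  exfalso
  obtain ⟨k, t, ht, rfl⟩ := param_cases ⟨hs.1, h1⟩
  rw [gam_pc p k ⟨ht.1, ht.2.le⟩] at h
  obtain ⟨a1, a2, a3⟩ := T_scaled p ((gam_good p).m t)
  have q1 := mul_nonneg hε.le ht.1
  have q2 := mul_nonneg hb.le ht.1
  have q3 := mul_lt_mul_of_pos_left ht.2 hε
  have q4 := mul_lt_mul_of_pos_left ht.2 hb
  have h2 := congrArg Complex.re h
  fin_cases k <;> simp [pc] at h2 <;> linarith

lemma gam_re_lt {s : ℝ} (hs : s ∈ Ico (0:ℝ) 1) : p.r * (gam p s).re < p.r := by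
  have hr := p.hr
  obtain ⟨a1, a2, a3⟩ := (gam_good p).m s
  have : (gam p s).re ≠ 1 := by
    intro h
    have : gam p s = 1 := Complex.ext (by simpa using h) (by simp; linarith)
    have := gam_one p ⟨hs.1, hs.2.le⟩ this
    linarith [hs.2]
  have : (gam p s).re < 1 := lt_of_le_of_ne (by linarith) this
  nlinarith

lemma pc_sep {k l : Fin 9} {s t : ℝ} (hs : s ∈ Ico (0:ℝ) 1) (ht : t ∈ Ico (0:ℝ) 1)
    (h : pc p (gam p) k s = pc p (gam p) l t) : k = l := by
  have hr := p.hr; have hε := p.hε; have hb := p.hb; have hsm := p.hsum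
  obtain ⟨a1, a2, a3⟩ := T_scaled p ((gam_good p).m s)
  have a4 := gam_re_lt p hs
  obtain ⟨b1, b2, b3⟩ := T_scaled p ((gam_good p).m t)
  have b4 := gam_re_lt p ht
  have q1 := mul_nonneg hε.le hs.1
  have q2 := mul_nonneg hb.le hs.1
  have q3 := mul_lt_mul_of_pos_left hs.2 hε
  have q4 := mul_lt_mul_of_pos_left hs.2 hb
  have r1 := mul_nonneg hε.le ht.1
  have r2 := mul_nonneg hb.le ht.1
  have r3 := mul_lt_mul_of_pos_left ht.2 hε
  have r4 := mul_lt_mul_of_pos_left ht.2 hb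
  rw [mul_one] at q3 q4 r3 r4
  have h1 := congrArg Complex.re h
  have h2 := congrArg Complex.im h
  clear h hs ht
  by_contra hne
  fin_cases k <;> fin_cases l <;> first | (exact hne rfl) | (clear hne; simp only [pc, Fin.zero_eta, Fin.mk_one, Fin.reduceFinMk, Matrix.cons_val, Matrix.cons_val_zero, Matrix.cons_val_one, φ0_re, φ0_im, φ1_re, φ1_im, φ2_re, φ2_im, φ3_re, φ3_im] at h1 h2; linarith)

lemma pc_same {k : Fin 9} {s t : ℝ} (h : pc p (gam p) k s = pc p (gam p) k t) :
    s = t ∨ gam p s = gam p t := by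
  have hε := p.hε; have hb := p.hb
  have h1 := congrArg Complex.re h
  fin_cases k
  · left; simpa [pc, hε.ne'] using h1
  · exact Or.inr (φ_inj p 0 h)
  · left; simpa [pc, hε.ne'] using h1
  · exact Or.inr (φ_inj p 1 h)
  · left; simpa [pc, hb.ne'] using h1
  · exact Or.inr (φ_inj p 2 h)
  · left; simpa [pc, hε.ne'] using h1
  · exact Or.inr (φ_inj p 3 h)
  · left; simpa [pc, hε.ne'] using h1

lemma gam_inj {s t : ℝ} (hs : s ∈ Ico (0:ℝ) 1) (ht : t ∈ Ico (0:ℝ) 1) (h : gam p s = gam p t) :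
    s = t := by
  have key : ∀ n : ℕ, ∀ s ∈ Ico (0:ℝ) 1, ∀ t ∈ Ico (0:ℝ) 1, gam p s = gam p t →
      |s - t| ≤ (1 / 9 : ℝ) ^ n := by
    intro n
    induction n with
    | zero =>
      intro s hs t ht _
      rw [pow_zero, abs_le]
      constructor <;> linarith [hs.1, hs.2, ht.1, ht.2]
    | succ n ih =>
      intro s hs t ht h
      obtain ⟨k, s, hs', rfl⟩ := param_cases hs
      obtain ⟨l, t, ht', rfl⟩ := param_cases ht
      rw [gam_pc p k ⟨hs'.1, hs'.2.le⟩, gam_pc p l ⟨ht'.1, ht'.2.le⟩] at h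
      have := pc_sep p hs' ht' h
      subst this
      have e : (s + (k : ℕ)) / 9 - (t + (k : ℕ)) / 9 = (1 / 9) * (s - t) := by ring
      rw [e, abs_mul, pow_succ, mul_comm, abs_of_pos (by norm_num : (0:ℝ) < 1 / 9)]
      refine mul_le_mul_of_nonneg_right ?_ (by norm_num)
      rcases pc_same p h with h | h
      · rw [h]; simp
      · exact ih s hs' t ht' h
  have ht0 : Filter.Tendsto (fun n : ℕ => (1 / 9 : ℝ) ^ n) Filter.atTop (nhds 0) :=
    tendsto_pow_atTop_nhds_zero_of_lt_one (by norm_num) (by norm_num)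
  have := ge_of_tendsto' ht0 fun n => key n s hs t ht h
  have := abs_nonpos_iff.1 this
  linarith

/-! ### The closed loop -/

def loop (t : ℝ) : ℂ :=
  gam p t + ⟨-(cl (t - 2)), -(cl (t - 1)) + cl (t - 3)⟩

lemma loop_cont : Continuous (loop p) := by
  have h := (gam p).continuous
  have c := cl_cont
  have e : loop p = fun t => gam p t + ((-(cl (t - 2)) : ℝ) + (-(cl (t - 1)) + cl (t - 3) : ℝ) * Complex.I) := by
    funext t
    rw [loop, Complex.mk_eq_add_mul_I]
  rw [e]
  fun_prop

lemma loop0 {t : ℝ} (h : t ≤ 1) : loop p t = gam p t := by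
  rw [loop, cl_le0 (by linarith), cl_le0 (by linarith), cl_le0 (by linarith)]
  apply Complex.ext <;> simp
lemma loop1 {t : ℝ} (h : 1 ≤ t) (h' : t ≤ 2) : loop p t = ⟨1, -(t - 1)⟩ := by
  rw [loop, cl_le0 (by linarith), cl_mid ⟨by linarith, by linarith⟩, cl_le0 (by linarith),
    (gam_good p).o t h]
  apply Complex.ext <;> simp
lemma loop2 {t : ℝ} (h : 2 ≤ t) (h' : t ≤ 3) : loop p t = ⟨1 - (t - 2), -1⟩ := by
  rw [loop, cl_mid ⟨by linarith, by linarith⟩, cl_ge1 (by linarith), cl_le0 (by linarith),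
    (gam_good p).o t (by linarith)]
  apply Complex.ext <;> simp <;> ring
lemma loop3 {t : ℝ} (h : 3 ≤ t) (h' : t ≤ 4) : loop p t = ⟨0, -1 + (t - 3)⟩ := by
  rw [loop, cl_ge1 (by linarith), cl_ge1 (by linarith), cl_mid ⟨by linarith, by linarith⟩,
    (gam_good p).o t (by linarith)]
  apply Complex.ext <;> simp

lemma loop_cases {t : ℝ} (h : t ∈ Ico (0:ℝ) 4) : (t ∈ Ico (0:ℝ) 1 ∧ loop p t = gam p t) ∨
    (1 ≤ t ∧ t < 2 ∧ loop p t = ⟨1, -(t - 1)⟩) ∨ (2 ≤ t ∧ t < 3 ∧ loop p t = ⟨1 - (t - 2), -1⟩) ∨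
    (3 ≤ t ∧ t < 4 ∧ loop p t = ⟨0, -1 + (t - 3)⟩) := by
  rcases lt_or_ge t 1 with h1 | h1
  · exact Or.inl ⟨⟨h.1, h1⟩, loop0 p h1.le⟩
  rcases lt_or_ge t 2 with h2 | h2
  · exact Or.inr (Or.inl ⟨h1, h2, loop1 p h1 h2.le⟩)
  rcases lt_or_ge t 3 with h3 | h3
  · exact Or.inr (Or.inr (Or.inl ⟨h2, h3, loop2 p h2 h3.le⟩))
  · exact Or.inr (Or.inr (Or.inr ⟨h3, h.2, loop3 p h3 h.2.le⟩))

lemma loop_inj : InjOn (loop p) (Ico 0 4) := by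
  intro s hs t ht h
  have aux : ∀ s t : ℝ, s ∈ Ico (0:ℝ) 1 → 1 ≤ t → t < 2 → gam p s = ⟨1, -(t - 1)⟩ → s = t := by
    intro s t hs h1 h2 h
    exfalso
    have hT := ((gam_good p).m s).1
    rw [h] at hT
    simp only at hT
    have : t = 1 := by linarith
    subst this
    have : gam p s = 1 := by rw [h]; apply Complex.ext <;> simp
    have := gam_one p ⟨hs.1, hs.2.le⟩ this
    linarith [hs.2]
  have hTs := ((gam_good p).m s).1
  have hTt := ((gam_good p).m t).1
  rcases loop_cases p hs with ⟨a1, a2⟩ | ⟨a1, a1', a2⟩ | ⟨a1, a1', a2⟩ | ⟨a1, a1', a2⟩ <;>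
  rcases loop_cases p ht with ⟨b1, b2⟩ | ⟨b1, b1', b2⟩ | ⟨b1, b1', b2⟩ | ⟨b1, b1', b2⟩ <;>
  rw [a2, b2] at h <;> have hre := congrArg Complex.re h <;> have him := congrArg Complex.im h <;>
  (try simp only at hre) <;> (try simp only at him) <;>
  first
    | exact gam_inj p a1 b1 h
    | exact aux _ _ a1 b1 b1' h
    | exact (aux _ _ b1 a1 a1' h.symm).symm
    | linarith

lemma loop_range : loop p '' Ico 0 4 = Gam p ∪ S3 := by
  apply Subset.antisymm
  · rintro _ ⟨t, ht, rfl⟩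
    rcases loop_cases p ht with ⟨a1, a2⟩ | ⟨a1, a1', a2⟩ | ⟨a1, a1', a2⟩ | ⟨a1, a1', a2⟩ <;> rw [a2]
    · exact Or.inl ⟨t, ⟨a1.1, a1.2.le⟩, rfl⟩
    · refine Or.inr (Or.inl ⟨?_, ?_, ?_⟩) <;> simp <;> linarith
    · refine Or.inr (Or.inr (Or.inl ⟨?_, ?_, ?_⟩)) <;> simp <;> linarith
    · refine Or.inr (Or.inr (Or.inr ⟨?_, ?_, ?_⟩)) <;> simp <;> linarith
  · have h4 : loop p 4 = loop p 0 := by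
      rw [loop3 p (by norm_num) le_rfl, loop0 p (by norm_num), (gam_good p).z 0 le_rfl]
      apply Complex.ext <;> norm_num
    have gen : ∀ t ∈ Icc (0:ℝ) 4, loop p t ∈ loop p '' Ico 0 4 := by
      intro t ht
      rcases ht.2.eq_or_lt with h | h
      · rw [h, h4]; exact ⟨0, by simp, rfl⟩
      · exact ⟨t, ⟨ht.1, h⟩, rfl⟩
    rintro z (⟨t, ht, rfl⟩ | ⟨a1, a2, a3⟩ | ⟨a1, a2, a3⟩ | ⟨a1, a2, a3⟩)
    · rw [← loop0 p ht.2]; exact gen t ⟨ht.1, by linarith [ht.2]⟩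
    · have : z = loop p (1 - z.im) := by
        rw [loop1 p (by linarith) (by linarith)]; apply Complex.ext <;> simp [a1]
      rw [this]; exact gen _ ⟨by linarith, by linarith⟩
    · have : z = loop p (3 - z.re) := by
        rw [loop2 p (by linarith) (by linarith)]; apply Complex.ext <;> simp [a1]; ring
      rw [this]; exact gen _ ⟨by linarith, by linarith⟩
    · have : z = loop p (4 + z.im) := by
        rw [loop3 p (by linarith) (by linarith)]; apply Complex.ext <;> simp [a1]; ring
      rw [this]; exact gen _ ⟨by linarith, by linarith⟩

lemma exists_loop : ∃ f : Circle → ℂ, Continuous f ∧ Function.Injective f ∧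
    range f = Gam p ∪ S3 := by
  haveI : Fact ((0:ℝ) < 4) := ⟨by norm_num⟩
  have hc : Continuous (AddCircle.liftIco (4:ℝ) 0 (loop p)) := by
    refine AddCircle.liftIco_zero_continuous ?_ (loop_cont p).continuousOn
    rw [loop3 p (by norm_num) le_rfl, loop0 p (by norm_num), (gam_good p).z 0 le_rfl]
    apply Complex.ext <;> norm_num
  let e := AddCircle.homeomorphCircle (T := 4) (by norm_num)
  refine ⟨AddCircle.liftIco (4:ℝ) 0 (loop p) ∘ e.symm, hc.comp e.symm.continuous, ?_, ?_⟩
  · refine Function.Injective.comp ?_ e.symm.injective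
    intro x y h
    obtain ⟨x, hx, rfl⟩ := AddCircle.eq_coe_Ico x
    obtain ⟨y, hy, rfl⟩ := AddCircle.eq_coe_Ico y
    rw [AddCircle.liftIco_zero_coe_apply hx, AddCircle.liftIco_zero_coe_apply hy] at h
    rw [loop_inj p hx hy h]
  · rw [e.symm.surjective.range_comp, ← loop_range]
    apply Subset.antisymm
    · rintro _ ⟨x, rfl⟩
      obtain ⟨x, hx, rfl⟩ := AddCircle.eq_coe_Ico x
      rw [AddCircle.liftIco_zero_coe_apply hx]
      exact ⟨x, hx, rfl⟩
    · rintro _ ⟨x, hx, rfl⟩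
      exact ⟨(x : AddCircle (4:ℝ)), AddCircle.liftIco_zero_coe_apply hx⟩

end KK

namespace KK
variable (p : Par)

/-! ### Dimension -/

def dig (j : Fin 4) : Fin 9 := ![1, 3, 5, 7] j

def tau (w : ℕ → Fin 4) : ℝ := Real.ofDigits (b := 9) (fun n => dig (w n))

lemma tau_mem (w : ℕ → Fin 4) : tau w ∈ Icc (0:ℝ) 1 :=
  ⟨Real.ofDigits_nonneg _, Real.ofDigits_le_one _⟩

lemma tau_shift (w : ℕ → Fin 4) :
    tau w = (tau (fun n => w (n + 1)) + ((dig (w 0) : Fin 9) : ℕ)) / 9 := by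
  rw [tau, Real.ofDigits_eq_sum_add_ofDigits _ 1]
  simp [Real.ofDigitsTerm, tau]
  ring

def ppi (w : ℕ → Fin 4) : ℂ := gam p (tau w)

lemma ppi_Gam (w : ℕ → Fin 4) : ppi p w ∈ Gam p := ⟨_, tau_mem w, rfl⟩

lemma ppi_shift (w : ℕ → Fin 4) : ppi p w = φ p (w 0) (ppi p (fun n => w (n + 1))) := by
  rw [ppi, tau_shift, gam_pc p _ (tau_mem _)]
  generalize w 0 = j
  fin_cases j <;> rfl

def dl : ℝ := min (p.ε / 2) p.b

lemma dl_pos : 0 < dl p := lt_min (half_pos p.hε) p.hb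

lemma cell_dist {j k : Fin 4} {z w : ℂ} (hz : z ∈ T) (hw : w ∈ T) (hjk : j ≠ k) :
    dl p ≤ dist (φ p j z) (φ p k w) := by
  have hr := p.hr; have hε := p.hε; have hb := p.hb; have hsm := p.hsum
  obtain ⟨a1, a2, a3⟩ := T_scaled p hz
  obtain ⟨b1, b2, b3⟩ := T_scaled p hw
  by_contra! h
  have d1 : dl p ≤ p.ε / 2 := min_le_left _ _
  have d2 : dl p ≤ p.b := min_le_right _ _
  rw [dist_eq_norm] at h
  have h1 := abs_lt.1 ((Complex.abs_re_le_norm _).trans_lt h)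
  have h2 := abs_lt.1 ((Complex.abs_im_le_norm _).trans_lt h)
  rw [Complex.sub_re] at h1
  rw [Complex.sub_im] at h2
  obtain ⟨h1, h1'⟩ := h1
  obtain ⟨h2, h2'⟩ := h2
  fin_cases j <;> fin_cases k <;> first | (exact hjk rfl) | (simp only [Fin.zero_eta, Fin.mk_one, Fin.reduceFinMk, φ0_re, φ0_im, φ1_re, φ1_im, φ2_re, φ2_im, φ3_re, φ3_im] at h1 h1' h2 h2'; linarith)

lemma ppi_dist (n : ℕ) : ∀ w w' : ℕ → Fin 4, (∀ m < n, w m = w' m) → w n ≠ w' n →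
    dl p * p.r ^ n ≤ dist (ppi p w) (ppi p w') := by
  induction n with
  | zero =>
    intro w w' _ h
    rw [ppi_shift p w, ppi_shift p w', pow_zero, mul_one]
    exact cell_dist p (Gam_T p (ppi_Gam p _)) (Gam_T p (ppi_Gam p _)) h
  | succ n ih =>
    intro w w' h h'
    have := ih (fun n => w (n + 1)) (fun n => w' (n + 1)) (fun m hm => h (m + 1) (by omega)) h'
    rw [ppi_shift p w, ppi_shift p w', h 0 (by omega), φ_dist, pow_succ]
    have := mul_le_mul_of_nonneg_left this p.hr.le
    linarith

def wd (u : (ℕ → Fin 2) × (ℕ → Fin 2)) : ℕ → Fin 4 :=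
  fun n => finProdFinEquiv (m := 2) (n := 2) (u.1 n, u.2 n)

lemma wd_inj : Function.Injective wd := by
  intro u v h
  have : ∀ n, (u.1 n, u.2 n) = (v.1 n, v.2 n) := fun n =>
    (finProdFinEquiv (m := 2) (n := 2)).injective (congrFun h n)
  simp only [Prod.mk.injEq] at this
  exact Prod.ext (funext fun n => (this n).1) (funext fun n => (this n).2)

def qq (u : (ℕ → Fin 2) × (ℕ → Fin 2)) : ℝ × ℝ := (Real.ofDigits u.1, Real.ofDigits u.2)

lemma ppi_wd (u v : (ℕ → Fin 2) × (ℕ → Fin 2)) (h : u ≠ v) : ∃ n : ℕ,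
    dl p * p.r ^ n ≤ dist (ppi p (wd u)) (ppi p (wd v)) ∧ dist (qq u) (qq v) ≤ (1 / 2 : ℝ) ^ n := by
  classical
  have hne : ∃ n, wd u n ≠ wd v n := by
    by_contra! h'
    exact h (wd_inj (funext h'))
  have hlt : ∀ m < Nat.find hne, wd u m = wd v m := fun m hm => by
    simpa using Nat.find_min hne hm
  refine ⟨Nat.find hne, ppi_dist p _ _ _ hlt (Nat.find_spec hne), ?_⟩
  have hlt' : ∀ m < Nat.find hne, u.1 m = v.1 m ∧ u.2 m = v.2 m := fun m hm => by
    have := (finProdFinEquiv (m := 2) (n := 2)).injective (hlt m hm)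
    simpa using this
  rw [Prod.dist_eq, one_div, inv_pow]
  refine max_le ?_ ?_
  · rw [Real.dist_eq]
    exact_mod_cast Real.abs_ofDigits_sub_ofDigits_le (fun m hm => (hlt' m hm).1)
  · rw [Real.dist_eq]
    exact_mod_cast Real.abs_ofDigits_sub_ofDigits_le (fun m hm => (hlt' m hm).2)

lemma dim_Gam {α : ℝ} (hα : 0 < α) (h : 1 / 2 ≤ p.r ^ α) :
    ENNReal.ofReal (2 * α) ≤ dimH (Gam p) := by
  have hr := p.hr
  have hd := dl_pos p
  let P : (ℕ → Fin 2) × (ℕ → Fin 2) → ℂ := fun u => ppi p (wd u)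
  have hP : Function.Injective P := by
    intro u v huv
    by_contra hne
    obtain ⟨n, h1, -⟩ := ppi_wd p u v hne
    have : dist (ppi p (wd u)) (ppi p (wd v)) = 0 := by rw [dist_eq_zero]; exact huv
    have : 0 < dl p * p.r ^ n := by positivity
    linarith
  let g : ℂ → ℝ × ℝ := fun z => qq (Function.invFun P z)
  have hg : ∀ u, g (P u) = qq u := fun u => by
    simp only [g]; rw [Function.leftInverse_invFun hP u]
  have hH : HolderOnWith ((dl p)⁻¹ ^ α).toNNReal α.toNNReal g (range P) := by
    rintro _ ⟨u, rfl⟩ _ ⟨v, rfl⟩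
    rw [hg, hg, edist_dist, edist_dist, Real.coe_toNNReal _ hα.le,
      ENNReal.ofReal_rpow_of_nonneg dist_nonneg hα.le, ← ENNReal.ofReal.eq_1,
      ← ENNReal.ofReal_mul (by positivity)]
    apply ENNReal.ofReal_le_ofReal
    by_cases huv : u = v
    · subst huv; simp; positivity
    obtain ⟨n, h1, h2⟩ := ppi_wd p u v huv
    rw [← Real.mul_rpow (by positivity) dist_nonneg]
    calc dist (qq u) (qq v) ≤ (1 / 2 : ℝ) ^ n := h2
      _ ≤ (p.r ^ α) ^ n := pow_le_pow_left₀ (by norm_num) h n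
      _ = (p.r ^ n) ^ α := by
        rw [← Real.rpow_natCast, ← Real.rpow_natCast, ← Real.rpow_mul hr.le, ← Real.rpow_mul hr.le, mul_comm]
      _ ≤ ((dl p)⁻¹ * dist (P u) (P v)) ^ α := by
        apply Real.rpow_le_rpow (by positivity) _ hα.le
        rw [inv_mul_eq_div, le_div_iff₀ hd, mul_comm]
        exact h1
  have hdim := hH.dimH_image_le (Real.toNNReal_pos.2 hα)
  have himg : Icc (0:ℝ) 1 ×ˢ Icc (0:ℝ) 1 ⊆ g '' range P := by
    rintro ⟨x, y⟩ ⟨hx, hy⟩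
    obtain ⟨a, -, ha⟩ := Real.ofDigits_SurjOn (b := 2) (by norm_num) hx
    obtain ⟨b, -, hb⟩ := Real.ofDigits_SurjOn (b := 2) (by norm_num) hy
    exact ⟨P (a, b), ⟨_, rfl⟩, by rw [hg]; exact Prod.ext ha hb⟩
  have hint : (interior (g '' range P)).Nonempty := by
    refine Set.Nonempty.mono (interior_mono himg) ?_
    rw [interior_prod_eq, interior_Icc]
    exact ⟨(1/2, 1/2), by constructor <;> constructor <;> norm_num⟩
  rw [Real.dimH_of_nonempty_interior hint] at hdim
  have hsub : range P ⊆ Gam p := by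
    rintro _ ⟨u, rfl⟩; exact ppi_Gam p _
  refine le_trans ?_ (dimH_mono hsub)
  have hα' : ((α.toNNReal : NNReal) : ENNReal) ≠ 0 := by
    simpa using hα
  rw [ENNReal.le_div_iff_mul_le (Or.inl hα') (Or.inl ENNReal.coe_ne_top)] at hdim
  refine le_trans (le_of_eq ?_) hdim
  rw [ENNReal.ofReal_mul (by norm_num)]
  simp [ENNReal.ofReal]

end KK

namespace KK

/-! ### Transfer to the Euclidean plane -/

lemma transfer {O : Set ℂ} {J d : ℝ} {c : ℂ} (ho : IsOpen O) (hcn : IsConnected O)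
    (hb : Bornology.IsBounded O) (hf : ∃ f : Circle → ℂ, Continuous f ∧ Function.Injective f ∧
      range f = frontier O) (hc : c ∈ O) (hR : ∀ z ∈ O, ∃ τ, Reach O J z c τ)
    (hd : ENNReal.ofReal d ≤ dimH (frontier O)) :
    ∃ Ω : Set Plane, IsJordanDomain Ω ∧ IsJohnDomain Ω J ∧ ENNReal.ofReal d ≤ dimH (frontier Ω) := by
  let e : ℂ ≃ₗᵢ[ℝ] Plane := Complex.orthonormalBasisOneI.repr
  have hfr : frontier (e '' O) = e '' frontier O := (e.toHomeomorph.image_frontier O).symm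
  obtain ⟨f, f1, f2, f3⟩ := hf
  have hne : (frontier O).Nonempty := by rw [← f3]; exact range_nonempty f
  refine ⟨e '' O, ⟨e.toHomeomorph.isOpenMap O ho, hcn.image e e.continuous.continuousOn,
    e.lipschitz.isBounded_image hb, ?_⟩, ⟨e c, ⟨c, hc, rfl⟩, ?_⟩, ?_⟩
  · have hn : ∀ x : sphere (0 : Plane) 1, e.symm x ∈ Submonoid.unitSphere ℂ := fun x => by
      have := x.2
      rw [mem_sphere_zero_iff_norm] at this
      have h' : ‖e.symm (x : Plane)‖ = 1 := by rw [e.symm.norm_map, this]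
      exact mem_sphere_zero_iff_norm.2 h'
    let h : sphere (0 : Plane) 1 → Circle := fun x => ⟨e.symm x, hn x⟩
    have hcont : Continuous h :=
      Continuous.subtype_mk (e.symm.continuous.comp continuous_subtype_val) hn
    have hinj : Function.Injective h := by
      intro x y hxy
      have : e.symm x = e.symm y := congrArg (fun z : Circle => (z : ℂ)) hxy
      exact Subtype.ext (e.symm.injective this)
    have hsurj : Function.Surjective h := by
      intro z
      refine ⟨⟨e z, ?_⟩, ?_⟩
      · rw [mem_sphere_zero_iff_norm, e.norm_map, Circle.norm_coe]
      · apply Circle.ext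
        exact e.symm_apply_apply z
    refine ⟨fun x => e (f (h x)), e.continuous.comp (f1.comp hcont),
      e.injective.comp (f2.comp hinj), ?_⟩
    rw [hfr, ← f3, ← range_comp]
    exact hsurj.range_comp (e ∘ f)
  · rintro _ ⟨z, hz, rfl⟩
    obtain ⟨τ, h0, γ, h1, h2, h3, h4⟩ := hR z hz
    refine ⟨τ, fun t => e (γ t), h0, ?_, congrArg e h2, congrArg e h3, fun t ht => ⟨⟨_, (h4 t ht).1, rfl⟩, ?_⟩⟩
    · have := e.lipschitz.comp_lipschitzOnWith h1
      rwa [one_mul] at this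
    · rw [hfr, infDist_image e.isometry, le_infDist hne]
      intro y hy
      by_contra! hlt
      rw [ho.frontier_eq] at hy
      exact hy.2 ((h4 t ht).2 (by rw [mem_ball, dist_comm]; exact hlt))
  · rw [hfr, e.isometry.dimH_image]
    exact hd

lemma case_ball {J d : ℝ} (hJ0 : 0 < J) (hJ : J < 1 / 2) (hd : d ≤ 1) :
    ∃ Ω : Set Plane, IsJordanDomain Ω ∧ IsJohnDomain Ω J ∧ ENNReal.ofReal d ≤ dimH (frontier Ω) := by
  have hfr : frontier (ball (0:ℂ) 1) = sphere 0 1 := frontier_ball 0 one_ne_zero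
  refine transfer (O := ball (0:ℂ) 1) (c := 0) isOpen_ball ⟨⟨0, by simp⟩, (_root_.convex_ball (0:ℂ) 1).isPreconnected⟩
    isBounded_ball ⟨fun z => z, continuous_subtype_val, Circle.coe_injective, ?_⟩ (by simp) ?_ ?_
  · rw [hfr]
    ext z
    constructor
    · rintro ⟨x, rfl⟩; exact mem_sphere_zero_iff_norm.2 (Circle.norm_coe x)
    · intro hz
      exact ⟨⟨z, hz⟩, rfl⟩
  · intro z hz
    refine ⟨0 + dist z 0, ?_⟩
    refine Reach.extend_convex (ρ0 := 0) (ρ1 := 1) hJ0.le (Reach.refl hz) (_root_.convex_ball (0:ℂ) 1)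
      subset_rfl hz (by simp) (by simp) subset_rfl (by simp) ?_
    have := mem_ball.1 hz
    have := dist_nonneg (x := z) (y := 0)
    nlinarith
  · rw [hfr]
    have hL : LipschitzWith 1 Complex.re := by
      refine LipschitzWith.of_dist_le_mul fun x y => ?_
      rw [NNReal.coe_one, one_mul, Real.dist_eq, dist_eq_norm, ← Complex.sub_re]
      exact Complex.abs_re_le_norm _
    have hsub : Icc (-1:ℝ) 1 ⊆ Complex.re '' sphere 0 1 := by
      intro x hx
      have h0 : 0 ≤ 1 - x ^ 2 := by nlinarith [hx.1, hx.2]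
      refine ⟨⟨x, Real.sqrt (1 - x ^ 2)⟩, ?_, rfl⟩
      rw [mem_sphere_zero_iff_norm, Complex.norm_def, Complex.normSq_mk, Real.mul_self_sqrt h0]
      rw [show x * x + (1 - x ^ 2) = 1 by ring, Real.sqrt_one]
    refine le_trans ?_ ((dimH_mono hsub).trans (hL.dimH_image_le _))
    have : (interior (Icc (-1:ℝ) 1)).Nonempty := by
      rw [interior_Icc]; exact ⟨0, by norm_num, by norm_num⟩
    rw [Real.dimH_of_nonempty_interior this]
    simp [hd]

/-! ### Choice of the parameters -/

lemma exists_par {J : ℝ} (hJ0 : 0 < J) (hJ : J < Real.log 2 / 2) :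
    ∃ p : Par, p.J = J ∧ 1 / 2 ≤ p.r ^ (1 - J / Real.log 2) := by
  have hL1 := Real.log_two_lt_d9
  have hL0 := Real.log_two_gt_d9
  have hJ' : J < 0.3466 := by linarith
  have hD : 0 < 1 - 0.4 * J := by linarith
  obtain ⟨a, ha⟩ : ∃ a, a = J / (1 - 0.4 * J) := ⟨_, rfl⟩
  have ha0 : 0 < a := by rw [ha]; positivity
  have haJ : a * (1 - 0.4 * J) = J := by rw [ha, div_mul_cancel₀ _ hD.ne']
  have ha1 : a ≤ 0.41 := by rw [ha, div_le_iff₀ hD]; linarith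
  have hX : J * (1 + 0.4 * a) = a := by linarith
  refine ⟨{ r := (1 - a) / 2, ε := a ^ 2 / 100, b := a - a ^ 2 / 25, J := J, hr := by linarith,
            hε := by positivity, hb := by nlinarith, hsum := by ring, hJ := hJ0, hJ1 := by linarith,
            hba := by linarith, hJb := ?_ }, rfl, ?_⟩
  · have e : a - a ^ 2 / 25 + 4 * (a ^ 2 / 100) = a := by ring
    rw [e]
    have h1 : J * (1 + 0.35 * a) ≤ a - a ^ 2 / 25 := by
      have e2 : a - a ^ 2 / 25 = J * (1 + 0.4 * a) * (1 - 0.04 * a) := by rw [hX]; ring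
      rw [e2, mul_assoc]
      apply mul_le_mul_of_nonneg_left _ hJ0.le
      nlinarith
    have h2 : 1 + a ^ 2 ≤ (1 + 0.35 * a) ^ 2 := by nlinarith
    calc J ^ 2 * (1 + a ^ 2) ≤ J ^ 2 * (1 + 0.35 * a) ^ 2 :=
          mul_le_mul_of_nonneg_left h2 (by positivity)
      _ = (J * (1 + 0.35 * a)) ^ 2 := by ring
      _ ≤ _ := pow_le_pow_left₀ (by positivity) h1 2
  · simp only
    have hr : 0 < (1 - a) / 2 := by linarith
    have h1a : 0 < 1 - a := by linarith
    have hlog : Real.log ((1 - a) / 2) = Real.log (1 - a) - Real.log 2 :=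
      Real.log_div h1a.ne' two_ne_zero
    have hl := Real.one_sub_inv_le_log_of_pos h1a
    have hq : 0 < 1 - 1.4 * J := by linarith
    have hinv : 1 - (1 - a)⁻¹ = -(J / (1 - 1.4 * J)) := by
      have h1 : (1 - a)⁻¹ = (1 - 0.4 * J) / (1 - 1.4 * J) := by
        rw [inv_eq_one_div, div_eq_div_iff h1a.ne' hq.ne']; linarith
      have h2 : (1 - 0.4 * J) / (1 - 1.4 * J) = 1 + J / (1 - 1.4 * J) := by
        rw [one_add_div hq.ne']; congr 1; ring
      rw [h1, h2]; ring
    rw [hinv] at hl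
    set L := Real.log 2 with hLdef
    set D := J / (1 - 1.4 * J) with hDdef
    have hDp : 0 < D := by positivity
    have hDm : D * (1 - 1.4 * J) = J := div_mul_cancel₀ _ hq.ne'
    have hLp : 0 < L := by linarith
    have hJL : 1.4 * J ≤ J / L := by rw [le_div_iff₀ hLp]; nlinarith
    have hJL2 : J / L < 1 := by rw [div_lt_one hLp]; linarith
    have hmain : (1 - J / L) * (L + D) ≤ L := by
      have : (1 - J / L) * L = L - J := by rw [sub_mul, div_mul_cancel₀ _ hLp.ne']; ring
      nlinarith
    rw [Real.rpow_def_of_pos hr, hlog]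
    have e : (1 / 2 : ℝ) = Real.exp (-L) := by
      rw [Real.exp_neg, hLdef, Real.exp_log two_pos]; norm_num
    rw [e]
    apply Real.exp_le_exp.2
    nlinarith

end KK

/-- **Sharpness of the dimension bound for John domains.** For every `J ∈ (0,1/2)`
there is a Jordan `J`-John domain `Ω ⊆ ℝ²` with `dim_H(∂Ω) ≥ 2 - (2/log 2)·J`. -/
theorem exists_john_jordan_domain_large_dimH (J : ℝ) (hJ0 : 0 < J) (hJ : J < 1/2) :
    ∃ Ω : Set Plane, IsJordanDomain Ω ∧ IsJohnDomain Ω J ∧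
      ENNReal.ofReal (2 - 2 / Real.log 2 * J) ≤ dimH (frontier Ω) := by
  by_cases h : J < Real.log 2 / 2
  · have hL := Real.log_pos (by norm_num : (1:ℝ) < 2)
    obtain ⟨p, rfl, hp⟩ := KK.exists_par hJ0 h
    refine KK.transfer (KK.Om_open p) (KK.Om_connected p) (KK.Om_bounded p) ?_
      (c := KK.ctr) (Or.inr KK.ctr_mem) (fun z hz => KK.reach_Om p hz) ?_
    · rw [KK.frontier_Om]; exact KK.exists_loop p
    · rw [KK.frontier_Om]
      have hα : 0 < 1 - p.J / Real.log 2 := by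
        rw [sub_pos, div_lt_one hL]; linarith
      refine le_trans (le_of_eq ?_) ((KK.dim_Gam p hα hp).trans (dimH_mono subset_union_left))
      congr 1; ring
  · have hL := Real.log_pos (by norm_num : (1:ℝ) < 2)
    refine KK.case_ball hJ0 hJ ?_
    have : 1 ≤ 2 / Real.log 2 * J := by
      rw [div_mul_eq_mul_div, le_div_iff₀ hL]; linarith
    linarith
end
end

section
/- For every ε ∈ (0,1/2), the cone domain Ω_ε fails to be a J-John domain for every J > ε. -/
open Metric Set MeasureTheory

noncomputable section

/-- The cone domain `Ω_ε`: a square with a cone of width parameter `ε` attached on top. -/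
def coneDomain (ε : ℝ) : Set Plane :=
  {x | |x 0| < 1 ∧ |x 1 + 1| < 1} ∪ {x | |x 0| < (1 - x 1) * ε ∧ 0 ≤ x 1}


theorem cone_frontier_aux (ε c y : ℝ) (hc : 0 < c) (hcy : c = (1 - y) * ε) (hy : 0 ≤ y)
    (s : ℝ) (hs : |s| = c) : (!₂[s, y] : Plane) ∈ frontier (coneDomain ε) := by
  have hn : (!₂[s, y] : Plane) ∉ coneDomain ε := by
    rintro (⟨_, h⟩ | ⟨h, _⟩)
    · simp at h
      have := (abs_lt.mp h).2
      linarith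
    · simp at h
      linarith
  refine ⟨?_, fun h => hn (interior_subset h)⟩
  have hf : Continuous (fun t : ℝ => (!₂[t, y] : Plane)) := by fun_prop
  refine map_mem_closure hf (s := Set.Ioo (-c) c) (x := s) ?_ ?_
  · rw [closure_Ioo (by linarith)]
    exact abs_le.mp hs.le
  · intro t ht
    right
    refine ⟨?_, ?_⟩
    · simpa [← hcy] using abs_lt.mpr ht
    · simpa using hy

theorem cone_infDist_aux (ε : ℝ) (hε : 0 < ε) (p : Plane) (hp : p ∈ coneDomain ε)
    (hy : 0 ≤ p 1) : Metric.infDist p (frontier (coneDomain ε)) ≤ (1 - p 1) * ε := by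
  rcases hp with ⟨_, h⟩ | ⟨h, _⟩
  · have := (abs_lt.mp h).2
    linarith
  have hc : 0 < (1 - p 1) * ε := (abs_nonneg _).trans_lt h
  have key : ∀ s : ℝ, |s| = (1 - p 1) * ε → |p 0 - s| ≤ (1 - p 1) * ε →
      Metric.infDist p (frontier (coneDomain ε)) ≤ (1 - p 1) * ε := by
    intro s hs hd
    refine (Metric.infDist_le_dist_of_mem
      (cone_frontier_aux ε _ (p 1) hc rfl hy s hs)).trans ?_
    rw [EuclideanSpace.dist_eq]
    simpa [Fin.sum_univ_two, Real.dist_eq, Real.sqrt_sq_eq_abs] using hd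
  have h2 := abs_lt.mp h
  rcases le_total 0 (p 0) with h0 | h0
  · exact key _ (abs_of_pos hc) (abs_le.mpr ⟨by linarith, by linarith⟩)
  · exact key (-((1 - p 1) * ε)) (by rw [abs_neg, abs_of_pos hc])
      (abs_le.mpr ⟨by linarith, by linarith⟩)

/-- **Failure of the John condition for the cone domain.** For every `ε ∈ (0,1/2)` the
cone domain `Ω_ε` fails to be a `J`-John domain for every `J > ε`. -/
theorem coneDomain_not_johnDomain (ε : ℝ) (hε0 : 0 < ε) (hε : ε < 1/2)
    (J : ℝ) (hJ : ε < J) : ¬ IsJohnDomain (coneDomain ε) J := by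
  rintro ⟨x₀, hx₀, H⟩
  have hJ0 : 0 < J := hε0.trans hJ
  have h1 : x₀ 1 < 1 := by
    rcases hx₀ with ⟨_, h⟩ | ⟨h, _⟩
    · have := (abs_lt.mp h).2
      linarith
    · have := (abs_nonneg _).trans_lt h
      have := pos_of_mul_pos_left this hε0.le
      linarith
  obtain ⟨h, hh0, hh, hh1⟩ : ∃ h : ℝ, 0 ≤ h ∧ x₀ 1 ≤ h ∧ h < 1 :=
    ⟨max 0 (x₀ 1), le_max_left _ _, le_max_right _ _, max_lt one_pos h1⟩
  obtain ⟨δ, hδ0, hδ1, hδ⟩ : ∃ δ : ℝ, 0 < δ ∧ δ < 1 - h ∧ J * δ < (J - ε) * (1 - h) := by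
    have hm : 0 < 1 - h := by linarith
    have hJε : 0 < J - ε := by linarith
    have hq : 0 < (J - ε) * (1 - h) := by positivity
    have e : J * ((J - ε) * (1 - h) / (2 * J)) = (J - ε) * (1 - h) / 2 := by field_simp
    refine ⟨(J - ε) * (1 - h) / (2 * J), by positivity, ?_, ?_⟩
    · rw [div_lt_iff₀ (by positivity)]
      nlinarith
    · rw [e]
      linarith
  have hx : (!₂[0, 1 - δ] : Plane) ∈ coneDomain ε := by
    right
    refine ⟨?_, ?_⟩
    · simpa using mul_pos hδ0 hε0
    · simp
      linarith
  obtain ⟨ℓ, γ, hℓ, hL, hγ0, hγℓ, hγ⟩ := H _ hx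
  have hcont : ContinuousOn (fun t => γ t 1) (Set.Icc 0 ℓ) := by
    have := hL.continuousOn
    fun_prop
  have hmem : h ∈ Set.Icc (γ ℓ 1) (γ 0 1) := by
    rw [hγ0, hγℓ]
    refine ⟨hh, ?_⟩
    simp
    linarith
  obtain ⟨t, ht, hth⟩ := intermediate_value_Icc' hℓ hcont hmem
  simp only at hth
  obtain ⟨hin, hd⟩ := hγ t ht
  have hb := cone_infDist_aux ε hε0 (γ t) hin (by rw [hth]; exact hh0)
  rw [hth] at hb
  have hdist := hL.dist_le_mul 0 ⟨le_rfl, hℓ⟩ t ht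
  have hc1 : |γ 0 1 - γ t 1| ≤ dist (γ 0) (γ t) := by
    rw [dist_eq_norm]
    simpa using PiLp.norm_apply_le (γ 0 - γ t) 1
  rw [hth, hγ0] at hc1
  have ht2 : 1 - δ - h ≤ t := by
    have h3 := (le_abs_self _).trans hc1
    rw [hγ0] at hdist
    simp [Real.dist_eq, abs_of_nonneg ht.1] at hdist h3
    linarith
  nlinarith [mul_le_mul_of_nonneg_left ht2 hJ0.le]
end
end
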